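/- arXiv:1811.04308 — 4 statements merged into one kernel-verified Lean document; each statement's English description precedes it below -/
import Mathlib

section
/- Let E ⊆ 𝕋 be a closed set of Lebesgue (arc-length) measure zero and let g be a polynomial having no zeros on E. Then for every f ∈ H² and every ε > 0 there exist F ∈ H² \ {0} and m ∈ ℕ such that ‖F − f‖_{H²} < ε and ‖Q_m(1/F) − g‖_{C(E)} < ε. -/
/-!
The argument rests on two observations.

*Exact optimal approximants.* Suppose `F = p / (d q)` with polynomials `p`, `d`, `q` such that
`|p| = |d|` on the unit circle and `p 0 ≠ 0`. Then for every polynomial `r`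
`⟨q F, r F⟩ = ⟨p (1 / d), p (r / (d q))⟩ = ⟨1, r / q⟩`, which, like `⟨1, r F⟩`, is a multiple of
`conj (r 0)`. Hence `c q F - 1` is orthogonal to every `r F` when `c = conj (p 0 / d 0)`, and the
optimal approximant of order `deg q` is `c q` (`opa_eq`). For `p` without zeros on the circle such
a `d`, zero-free on the closed disc, is obtained by reflecting the zeros of `p` inside the disc.
Polynomials `p` of this kind are dense in `H²` (`exists_good_near`), and `F` is close to `p` as soon as `d q` is close to `1` in a suitable sense
(`exists_inv`).

*Prescribing `c q` on `E`.* It remains to find `q` with `c q ≈ g` on `E` while `1 / (d q) ≈ 1` in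
`H²`. As `E` is null, there are bounded polynomials `ψ` which are close to `1` on `E` and small in
`H²` (`exists_peak`). They show that polynomials are dense in `C(E)` (`exists_poly_approx`), and `E`
being a proper subset of the circle, the zero-free function `g d / c` equals `exp u` on `E` for a
continuous `u` (`exists_log`). With `P ≈ u` on `E`, the function `exp (P ψ)` is close to `g d / c`
on `E` and its inverse is close to `1` in `H²`; its Taylor polynomials `a` give `q = t a`, where `t`
is a polynomial approximating `1 / d` uniformly on the disc (`exists_unit_pair`).

Multiplication by a polynomial is the operator `mulOp`, whose norm is at most the supremum of the
polynomial over the disc by von Neumann's inequality (`norm_mulOp_le`).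
-/

open MeasureTheory Filter Metric Polynomial

noncomputable section

/-- The Hardy space `H²`, modelled as the space `ℓ²(ℕ, ℂ)` of square-summable
Taylor-coefficient sequences: `f : H2` represents the holomorphic function
`z ↦ ∑ₖ f k * z ^ k` on the unit disc, and the `lp`-norm of `f` is its `H²` norm. -/
abbrev H2 := lp (fun _ : ℕ => ℂ) 2

/-- Value at `z` of the holomorphic function with Taylor coefficients `f`. -/
def h2Val (f : H2) (z : ℂ) : ℂ := ∑' k, f k * z ^ k

/-- `n`-th Taylor coefficient of the product of a polynomial `q` with the power series
having coefficients `a`. -/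
def coeffMul (q : Polynomial ℂ) (a : ℕ → ℂ) (n : ℕ) : ℂ :=
  ∑ j ∈ Finset.range (n + 1), q.coeff j * a (n - j)

/-- Taylor coefficients of `q·f − 1`. -/
def errSeq (q : Polynomial ℂ) (f : H2) (n : ℕ) : ℂ :=
  coeffMul q (fun k => f k) n - if n = 0 then 1 else 0

/-- The `H²` norm `‖q·f − 1‖_{H²}`. -/
def h2ErrNorm (q : Polynomial ℂ) (f : H2) : ℝ :=
  Real.sqrt (∑' n, ‖errSeq q f n‖ ^ 2)

/-- `Q` is an optimal polynomial approximant of order `n` of `1/f`: it has degree at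
most `n` and minimizes `‖q·f − 1‖_{H²}` over all polynomials `q` of degree at most `n`. -/
def IsOpa (n : ℕ) (f : H2) (Q : Polynomial ℂ) : Prop :=
  Q.degree ≤ (n : WithBot ℕ) ∧
    ∀ q : Polynomial ℂ, q.degree ≤ (n : WithBot ℕ) → h2ErrNorm Q f ≤ h2ErrNorm q f

open Classical in
/-- The optimal polynomial approximant `Q_n(1/f)` (well defined whenever the minimizer
exists and is unique, which is the case for every `f ≠ 0`). -/
def opa (n : ℕ) (f : H2) : Polynomial ℂ :=
  if h : ∃! Q : Polynomial ℂ, IsOpa n f Q then h.choose else 0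

/-- Sup-distance of two functions over a set `E` (the distance in `C(E)`). -/
def supDist (E : Set ℂ) (u v : ℂ → ℂ) : ℝ := ⨆ z : E, ‖u z - v z‖

/-- `f` has universal optimal polynomial approximants on `E`: every continuous function
on `E` is the uniform limit on `E` of a subsequence of the sequence `Q_n(1/f)`. -/
def HasUniversalOpa (E : Set ℂ) (f : H2) : Prop :=
  ∀ g : ℂ → ℂ, ContinuousOn g E →
    ∃ m : ℕ → ℕ, StrictMono m ∧
      TendstoUniformlyOn (fun s z => (opa (m s) f).eval z) g atTop E

/-- `E ⊆ 𝕋` has arc-length (Lebesgue) measure zero. -/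
def circleNull (E : Set ℂ) : Prop :=
  volume {θ : ℝ | Complex.exp (θ * Complex.I) ∈ E} = 0


/-! ### The shift operator and the polynomial calculus on `H²` -/

/-- The forward shift `f ↦ z f` on Taylor coefficients. -/
def shiftSeq (f : ℕ → ℂ) (n : ℕ) : ℂ := if n = 0 then 0 else f (n - 1)

lemma shiftSeq_memlp (f : H2) : Memℓp (shiftSeq (fun k => f k)) 2 := by
  rw [memℓp_gen_iff (by norm_num), ← summable_nat_add_iff 1]
  simpa [shiftSeq] using (memℓp_gen_iff (by norm_num)).1 (lp.memℓp f)

/-- Multiplication by `z` on `H²`, an isometry. -/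
def shiftI : H2 →ₗᵢ[ℂ] H2 where
  toFun f := ⟨shiftSeq (fun k => f k), shiftSeq_memlp f⟩
  map_add' f g := by
    ext n
    simp only [shiftSeq, lp.coeFn_add, Pi.add_apply]
    split_ifs <;> simp
  map_smul' c f := by
    ext n
    simp only [shiftSeq, lp.coeFn_smul, Pi.smul_apply, RingHom.id_apply]
    split_ifs <;> simp
  norm_map' f := by
    have h2 : (0 : ℝ) < (2 : ENNReal).toReal := by norm_num
    have hs := (memℓp_gen_iff h2).1 (shiftSeq_memlp f)
    have h := lp.norm_rpow_eq_tsum h2 f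
    have h' := lp.norm_rpow_eq_tsum h2 (⟨shiftSeq (fun k => f k), shiftSeq_memlp f⟩ : H2)
    simp only [] at h'
    rw [hs.tsum_eq_zero_add] at h'
    simp only [shiftSeq, Nat.add_sub_cancel, if_true, norm_zero, Nat.add_eq_zero_iff, one_ne_zero,
      and_false, if_false] at h'
    rw [Real.zero_rpow h2.ne', zero_add, ← h] at h'
    exact (Real.rpow_left_inj (norm_nonneg _) (norm_nonneg _) h2.ne').1 h'

/-- Multiplication by `z` on `H²` as an element of the Banach algebra of bounded operators. -/
def sh : H2 →L[ℂ] H2 := shiftI.toContinuousLinearMap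

lemma sh_apply (f : H2) (n : ℕ) : (sh f) n = if n = 0 then 0 else f (n - 1) := rfl

lemma inner_sh (u v : H2) : inner ℂ (sh u) (sh v) = inner ℂ u v := shiftI.inner_map_map u v

lemma sh_pow_apply (j : ℕ) (f : H2) (n : ℕ) :
    ((sh ^ j) f) n = if j ≤ n then f (n - j) else 0 := by
  induction j generalizing n with
  | zero => simp
  | succ j ih =>
    rw [pow_succ', mul_apply_eq_comp, sh_apply]
    rcases n with _ | n
    · simp
    · rw [if_neg n.succ_ne_zero, Nat.add_sub_cancel, ih]
      simp

/-- The operator of multiplication by the polynomial `p` on `H²`. -/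
def mulOp (p : ℂ[X]) : H2 →L[ℂ] H2 := aeval sh p

lemma mulOp_mul (p q : ℂ[X]) : mulOp (p * q) = mulOp p * mulOp q := map_mul _ _ _
lemma mulOp_mul_apply (p q : ℂ[X]) (f : H2) : mulOp (p * q) f = mulOp p (mulOp q f) := by
  rw [mulOp_mul]; rfl
lemma mulOp_add_apply (p q : ℂ[X]) (f : H2) : mulOp (p + q) f = mulOp p f + mulOp q f := by
  simp [mulOp]
lemma mulOp_sub_apply (p q : ℂ[X]) (f : H2) : mulOp (p - q) f = mulOp p f - mulOp q f := by
  simp [mulOp]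
lemma mulOp_C_apply (c : ℂ) (f : H2) : mulOp (C c) f = c • f := by
  simp [mulOp, Algebra.algebraMap_eq_smul_one]
lemma mulOp_one_apply (f : H2) : mulOp 1 f = f := by simp [mulOp]
lemma mulOp_X_apply (f : H2) : mulOp X f = sh f := by simp [mulOp]

lemma mulOp_apply (q : ℂ[X]) (f : H2) (n : ℕ) :
    (mulOp q f) n = coeffMul q (fun k => f k) n := by
  have key : ∀ N, q.natDegree < N → (mulOp q f) n
      = ∑ j ∈ Finset.range N, q.coeff j * (if j ≤ n then f (n - j) else 0) := by
    intro N hN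
    rw [mulOp, aeval_eq_sum_range' hN, _root_.sum_apply, lp.coeFn_sum,
      Finset.sum_apply]
    refine Finset.sum_congr rfl fun j _ => ?_
    rw [_root_.smul_apply, lp.coeFn_smul, Pi.smul_apply, smul_eq_mul, sh_pow_apply]
  rw [key (q.natDegree + 1 + (n + 1)) (by omega), coeffMul]
  rw [← Finset.sum_subset (Finset.range_subset_range.2
    (by omega : n + 1 ≤ q.natDegree + 1 + (n + 1)))]
  · refine Finset.sum_congr rfl fun j hj => ?_
    rw [if_pos (by simpa [Nat.lt_succ_iff] using hj)]
  · intro j _ hj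
    rw [if_neg (by simpa [Nat.lt_succ_iff] using hj), mul_zero]

lemma mulOp_apply_zero (q : ℂ[X]) (f : H2) : (mulOp q f) 0 = q.coeff 0 * f 0 := by
  simp [mulOp_apply, coeffMul]

/-- The constant function `1` in `H²`. -/
def one2 : H2 := lp.single 2 0 1

lemma one2_apply (n : ℕ) : one2 n = if n = 0 then 1 else 0 := by
  rw [one2, lp.single_apply, Pi.single_apply]

lemma inner_one2 (f : H2) : inner ℂ one2 f = f 0 := by
  rw [one2, lp.inner_single_left]; simp

lemma norm_one2 : ‖one2‖ = 1 := by
  rw [one2, lp.norm_single (by norm_num)]; simp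

lemma mulOp_one2 (q : ℂ[X]) (n : ℕ) : (mulOp q one2) n = q.coeff n := by
  rw [mulOp_apply, coeffMul, Finset.sum_eq_single n]
  · simp [one2_apply]
  · intro j hj hjn
    rw [one2_apply, if_neg (by have := Finset.mem_range.1 hj; omega), mul_zero]
  · simp

lemma dense_mulOp_one2 (f : H2) (ε : ℝ) (hε : 0 < ε) :
    ∃ p : ℂ[X], ‖mulOp p one2 - f‖ < ε := by
  have h := lp.hasSum_single (p := 2) (by norm_num) f
  obtain ⟨s, hs⟩ := ((Metric.tendsto_nhds.1 h) ε hε).exists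
  refine ⟨∑ i ∈ s, monomial i (f i), ?_⟩
  rw [dist_eq_norm] at hs
  suffices he : mulOp (∑ i ∈ s, monomial i (f i)) one2 = ∑ i ∈ s, lp.single 2 i (f i) by
    rwa [he]
  ext n
  rw [mulOp_one2, lp.coeFn_sum, Finset.sum_apply, finsetSum_coeff]
  refine Finset.sum_congr rfl fun i _ => ?_
  rw [coeff_monomial, lp.single_apply, Pi.single_apply]
  simp [eq_comm]

/-! ### Von Neumann's inequality for the shift -/

/-- Boundary values: the isometry from `H²` into `L²` of the circle. -/
def bdry : H2 →ₗᵢ[ℂ] Lp ℂ 2 (@AddCircle.haarAddCircle 1 _) :=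
  ((orthonormal_fourier (T := 1)).comp (fun n : ℕ => (n : ℤ))
    Nat.cast_injective).orthogonalFamily.linearIsometry

lemma bdry_single (n : ℕ) (a : ℂ) : bdry (lp.single 2 n a) = a • fourierLp 2 (n : ℤ) := by
  rw [bdry, OrthogonalFamily.linearIsometry_apply_single]
  simp [LinearIsometry.toSpanSingleton_apply]

/-- The boundary values of the polynomial `p` as a continuous function on the circle. -/
def circ (p : ℂ[X]) : C(AddCircle (1 : ℝ), ℂ) :=
  ⟨fun x => p.eval (fourier 1 x), p.continuous.comp (fourier 1).continuous⟩

lemma bdry_mulOp_one2 (p : ℂ[X]) :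
    bdry (mulOp p one2) = ContinuousMap.toLp 2 AddCircle.haarAddCircle ℂ (circ p) := by
  induction p using Polynomial.induction_on' with
  | add p q hp hq =>
    rw [mulOp_add_apply, map_add, hp, hq, ← map_add]
    congr 1; ext x; simp [circ]
  | monomial n a =>
    have : mulOp (monomial n a) one2 = lp.single 2 n a := by
      ext k
      rw [mulOp_one2, coeff_monomial, lp.single_apply, Pi.single_apply]
      simp [eq_comm]
    rw [this, bdry_single, fourierLp, ← map_smul]
    congr 1; ext x
    simp [circ, fourier_apply, AddCircle.toCircle_nsmul]

lemma norm_mulOp_poly (p u : ℂ[X]) (K : ℝ) (hp : ∀ z : ℂ, ‖z‖ ≤ 1 → ‖p.eval z‖ ≤ K) :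
    ‖mulOp p (mulOp u one2)‖ ≤ K * ‖mulOp u one2‖ := by
  rw [← mulOp_mul_apply, ← bdry.norm_map, ← bdry.norm_map (mulOp u one2), bdry_mulOp_one2,
    bdry_mulOp_one2]
  refine Lp.norm_le_mul_norm_of_ae_le_mul ?_
  filter_upwards [ContinuousMap.coeFn_toLp (p := 2) (𝕜 := ℂ) AddCircle.haarAddCircle (circ (p * u)),
    ContinuousMap.coeFn_toLp (p := 2) (𝕜 := ℂ) AddCircle.haarAddCircle (circ u)] with x h1 h2
  rw [h1, h2]
  have : ‖(fourier 1 x : ℂ)‖ ≤ 1 := by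
    rw [fourier_apply, Circle.norm_coe]
  simp only [circ, ContinuousMap.coe_mk, eval_mul, norm_mul]
  exact mul_le_mul_of_nonneg_right (hp _ this) (norm_nonneg _)

/-- Von Neumann's inequality: `‖p f‖ ≤ (sup |p|) ‖f‖` on `H²`. -/
lemma norm_mulOp_le (p : ℂ[X]) (K : ℝ) (hp : ∀ z : ℂ, ‖z‖ ≤ 1 → ‖p.eval z‖ ≤ K) (f : H2) :
    ‖mulOp p f‖ ≤ K * ‖f‖ := by
  have hd : Dense (Set.range fun u : ℂ[X] => mulOp u one2) := by
    intro f
    rw [Metric.mem_closure_iff]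
    intro ε hε
    obtain ⟨p, hp⟩ := dense_mulOp_one2 f ε hε
    exact ⟨_, ⟨p, rfl⟩, by rwa [dist_comm, dist_eq_norm]⟩
  refine hd.induction (P := fun f => ‖mulOp p f‖ ≤ K * ‖f‖) ?_ ?_ f
  · rintro _ ⟨u, rfl⟩
    exact norm_mulOp_poly p u K hp
  · exact isClosed_le (by fun_prop) (by fun_prop)

/-! ### Optimal approximants of explicit functions -/

lemma errSeq_eq (q : ℂ[X]) (F : H2) (n : ℕ) : errSeq q F n = (mulOp q F - one2) n := by
  rw [lp.coeFn_sub, Pi.sub_apply, mulOp_apply, one2_apply]; rfl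

lemma h2ErrNorm_eq (q : ℂ[X]) (F : H2) : h2ErrNorm q F = ‖mulOp q F - one2‖ := by
  rw [h2ErrNorm, lp.norm_eq_tsum_rpow (by norm_num), Real.sqrt_eq_rpow]
  simp [errSeq_eq]

/-- Let `F = p G` with `G = 1 / (d q)` and `|p| = |d|` on the circle (expressed through inner
products). Then `1/F` has the optimal approximant `c q` with `c = conj (p 0 / d 0)`: the error
`c q F - 1` is orthogonal to `r F` for *every* polynomial `r`, so its degree is the only
constraint that matters. -/
lemma opa_eq (p d q : ℂ[X]) (G : H2)
    (hin : ∀ u v : H2, inner ℂ (mulOp p u) (mulOp p v) = inner ℂ (mulOp d u) (mulOp d v))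
    (hG : mulOp (d * q) G = one2) (hp : p.coeff 0 ≠ 0) :
    opa q.natDegree (mulOp p G) =
      C ((starRingEnd ℂ) (p.coeff 0 / d.coeff 0)) * q := by
  set c : ℂ := (starRingEnd ℂ) (p.coeff 0 / d.coeff 0) with hc
  set F := mulOp p G with hF
  have hG0 : d.coeff 0 * q.coeff 0 * G 0 = 1 := by
    have := congrArg (fun f : H2 => f 0) hG
    simpa [mulOp_apply_zero, one2_apply, mul_coeff_zero] using this
  have hd : d.coeff 0 ≠ 0 := by
    intro h; simp [h] at hG0
  have orth : ∀ r : ℂ[X], inner ℂ (mulOp (C c * q) F - one2) (mulOp r F) = 0 := by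
    intro r
    have h1 : mulOp (C c * q) F = c • mulOp p (mulOp q G) := by
      rw [mulOp_mul_apply, mulOp_C_apply, hF, ← mulOp_mul_apply, ← mulOp_mul_apply, mul_comm]
    have h2 : mulOp r F = mulOp p (mulOp r G) := by
      rw [hF, ← mulOp_mul_apply, ← mulOp_mul_apply, mul_comm]
    have h3 : mulOp d (mulOp q G) = one2 := by rw [← mulOp_mul_apply, hG]
    rw [inner_sub_left, h1, inner_smul_left, h2, hin, h3, inner_one2, inner_one2,
      mulOp_apply_zero d, mulOp_apply_zero p, hc, Complex.conj_conj]
    field_simp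
    ring
  have pyth : ∀ r : ℂ[X], ‖mulOp r F - one2‖ ^ 2 =
      ‖mulOp (C c * q) F - one2‖ ^ 2 + ‖mulOp (r - C c * q) F‖ ^ 2 := by
    intro r
    have : mulOp r F - one2 = (mulOp (C c * q) F - one2) + mulOp (r - C c * q) F := by
      rw [mulOp_sub_apply]; abel
    rw [this, sq, sq, sq]
    exact norm_add_sq_eq_norm_sq_add_norm_sq_of_inner_eq_zero _ _ (orth _)
  have hopa : IsOpa q.natDegree F (C c * q) := by
    refine ⟨(natDegree_le_iff_degree_le.1 (natDegree_C_mul_le c q)), fun r _ => ?_⟩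
    rw [h2ErrNorm_eq, h2ErrNorm_eq]
    refine (sq_le_sq₀ (norm_nonneg _) (norm_nonneg _)).1 ?_
    rw [pyth r]
    nlinarith [sq_nonneg ‖mulOp (r - C c * q) F‖]
  have huniq : ∀ r, IsOpa q.natDegree F r → r = C c * q := by
    intro r hr
    have h := hr.2 _ hopa.1
    rw [h2ErrNorm_eq, h2ErrNorm_eq] at h
    have h0 : mulOp (r - C c * q) F = 0 := by
      rw [← norm_eq_zero]
      have := pow_le_pow_left₀ (norm_nonneg _) h 2
      rw [pyth r] at this
      nlinarith [sq_nonneg ‖mulOp (r - C c * q) F‖]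
    -- multiplying by `d q` turns `F` into the polynomial `p`
    have h1 : mulOp ((r - C c * q) * p) one2 = 0 := by
      rw [← hG, ← mulOp_mul_apply, show (r - C c * q) * p * (d * q) = (d * q) * ((r - C c * q) * p)
        by ring, mulOp_mul_apply, mulOp_mul_apply _ p, h0, map_zero]
    have h2 : (r - C c * q) * p = 0 := by
      ext n
      rw [← mulOp_one2, h1]; simp
    rcases mul_eq_zero.1 h2 with h3 | h3
    · exact sub_eq_zero.1 h3
    · exact absurd (by rw [h3, coeff_zero]) hp
  have hex : ∃! Q : ℂ[X], IsOpa q.natDegree F Q := ⟨_, hopa, huniq⟩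
  rw [opa, dif_pos hex]
  exact huniq _ hex.choose_spec.1

/-- If `b` is close to `1` in `H²` and `b ≈ 1/s` uniformly on the disc, then `s` is invertible in
`H²` with inverse close to `1`. -/
lemma exists_inv (s b : ℂ[X]) (η δ : ℝ) (h0 : 0 ≤ η) (h1 : η < 1)
    (h : ∀ z : ℂ, ‖z‖ ≤ 1 → ‖(s * b).eval z - 1‖ ≤ η) (hb : ‖mulOp b one2 - one2‖ ≤ δ) :
    ∃ G : H2, mulOp s G = one2 ∧ ‖G - one2‖ ≤ (η + δ) / (1 - η) := by
  set e : ℂ[X] := 1 - s * b with he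
  have hev : ∀ f : H2, ‖mulOp e f‖ ≤ η * ‖f‖ := by
    refine norm_mulOp_le e η fun z hz => ?_
    rw [he, eval_sub, eval_one, norm_sub_rev]; exact h z hz
  have hen : ‖mulOp e‖ ≤ η := ContinuousLinearMap.opNorm_le_bound _ h0 hev
  let U := Units.oneSub (mulOp e) (hen.trans_lt h1)
  have hU : ∀ f : H2, mulOp (s * b) f = (U : H2 →L[ℂ] H2) f := by
    intro f
    have : s * b = 1 - e := by rw [he]; ring
    rw [this, mulOp_sub_apply, mulOp_one_apply]; rfl
  let x : H2 := ((U⁻¹ : (H2 →L[ℂ] H2)ˣ) : H2 →L[ℂ] H2) one2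
  have hx : mulOp (s * b) x = one2 := by
    rw [hU]
    change ((U : H2 →L[ℂ] H2) * ((U⁻¹ : (H2 →L[ℂ] H2)ˣ) : H2 →L[ℂ] H2)) one2 = one2
    rw [Units.mul_inv]; rfl
  refine ⟨mulOp b x, by rw [← mulOp_mul_apply, hx], ?_⟩
  set G := mulOp b x
  have hG : mulOp s G = one2 := by rw [← mulOp_mul_apply, hx]
  have hGe : G = mulOp e G + mulOp b one2 := by
    rw [he, mulOp_sub_apply, mulOp_one_apply, mul_comm s b, mulOp_mul_apply, hG]; abel
  have h2 : ‖mulOp e G‖ ≤ η * (‖G - one2‖ + 1) := by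
    refine (hev G).trans (mul_le_mul_of_nonneg_left ?_ h0)
    have := norm_add_le (G - one2) one2
    rwa [sub_add_cancel, norm_one2] at this
  have h3 : ‖G - one2‖ ≤ ‖mulOp e G‖ + ‖mulOp b one2 - one2‖ := by
    have h4 : G - one2 = mulOp e G + (mulOp b one2 - one2) := by
      rw [← add_sub_assoc, ← hGe]
    rw [h4]; exact norm_add_le _ _
  rw [le_div_iff₀ (by linarith)]
  nlinarith

/-! ### Polynomials without zeros on the circle -/

/-- `d` is invertible in the disc algebra, with inverse a uniform limit of polynomials. -/
def InvDisc (d : ℂ[X]) : Prop :=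
  ∀ η > 0, ∃ t : ℂ[X], ∀ z : ℂ, ‖z‖ ≤ 1 → ‖(d * t).eval z - 1‖ ≤ η

lemma InvDisc.mul {d e : ℂ[X]} (hd : InvDisc d) (he : InvDisc e) : InvDisc (d * e) := by
  intro η hη
  have hη' : 0 < min (η / 3) 1 := by positivity
  obtain ⟨t, ht⟩ := hd _ hη'
  obtain ⟨s, hs⟩ := he _ hη'
  refine ⟨t * s, fun z hz => ?_⟩
  have h1 := ht z hz
  have h2 := hs z hz
  set x := (d * t).eval z with hx
  set y := (e * s).eval z with hy
  have : (d * e * (t * s)).eval z - 1 = (x - 1) * (y - 1) + (x - 1) + (y - 1) := by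
    simp only [hx, hy, eval_mul]; ring
  rw [this]
  refine (norm_add₃_le).trans ?_
  rw [norm_mul]
  have h3 : ‖x - 1‖ * ‖y - 1‖ ≤ min (η / 3) 1 * 1 :=
    mul_le_mul h1 (h2.trans (min_le_right _ _)) (norm_nonneg _) hη'.le
  have := min_le_left (η / 3) 1
  linarith

lemma invDisc_C {c : ℂ} (hc : c ≠ 0) : InvDisc (C c) := by
  intro η hη
  exact ⟨C c⁻¹, fun z _ => by simp [hc, hη.le]⟩

lemma invDisc_one_sub {b : ℂ} (hb : ‖b‖ < 1) : InvDisc (1 - C b * X) := by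
  intro η hη
  obtain ⟨N, hN⟩ := exists_pow_lt_of_lt_one hη hb
  refine ⟨∑ i ∈ Finset.range N, (C b * X) ^ i, fun z hz => ?_⟩
  rw [mul_neg_geom_sum]
  simp only [eval_sub, eval_one, eval_pow, eval_mul, eval_C, eval_X, sub_sub_cancel_left, norm_neg,
    norm_pow, norm_mul]
  refine le_trans (pow_le_pow_left₀ (by positivity) ?_ N) hN.le
  exact mul_le_of_le_one_right (norm_nonneg _) hz

lemma InvDisc.eval_ne_zero {d : ℂ[X]} (hd : InvDisc d) {z : ℂ} (hz : ‖z‖ ≤ 1) :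
    d.eval z ≠ 0 := by
  obtain ⟨t, ht⟩ := hd (1 / 2) (by norm_num)
  intro h
  have := ht z hz
  rw [eval_mul, h] at this
  norm_num at this

/-- `p = B d` with `B` a finite Blaschke product nonvanishing at `0` and `d` invertible in the
disc algebra; only `|p| = |d|` on the circle is recorded about `B = p / d`. -/
def Good (p : ℂ[X]) : Prop :=
  p.coeff 0 ≠ 0 ∧ ∃ d : ℂ[X], InvDisc d ∧
    ∀ u v : H2, inner ℂ (mulOp p u) (mulOp p v) = inner ℂ (mulOp d u) (mulOp d v)

lemma Good.mul {p q : ℂ[X]} (hp : Good p) (hq : Good q) : Good (p * q) := by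
  obtain ⟨hp0, d, hd, hpd⟩ := hp
  obtain ⟨hq0, e, he, hqe⟩ := hq
  refine ⟨by rw [mul_coeff_zero]; exact mul_ne_zero hp0 hq0, d * e, hd.mul he, fun u v => ?_⟩
  rw [mulOp_mul_apply, mulOp_mul_apply, hpd, mul_comm d e, mulOp_mul_apply, mulOp_mul_apply,
    ← hqe, ← mulOp_mul_apply, ← mulOp_mul_apply, ← mulOp_mul_apply, ← mulOp_mul_apply,
    mul_comm q d]

lemma good_C {c : ℂ} (hc : c ≠ 0) : Good (C c) :=
  ⟨by simpa using hc, C c, invDisc_C hc, fun _ _ => rfl⟩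

lemma good_lin {a : ℂ} (h0 : a ≠ 0) (h1 : ‖a‖ ≠ 1) : Good (X - C a) := by
  refine ⟨by simpa using h0, ?_⟩
  rcases lt_or_gt_of_ne h1 with h | h
  · refine ⟨1 - C ((starRingEnd ℂ) a) * X, invDisc_one_sub (by simpa using h), fun u v => ?_⟩
    simp only [mulOp_sub_apply, mulOp_X_apply, mulOp_C_apply, mulOp_one_apply, mulOp_mul_apply,
      inner_sub_left, inner_sub_right, inner_smul_left, inner_smul_right, inner_sh,
      Complex.conj_conj]
    ring
  · refine ⟨X - C a, ?_, fun _ _ => rfl⟩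
    have : X - C a = C (-a) * (1 - C a⁻¹ * X) := by
      rw [mul_sub, ← mul_assoc, ← C_mul, neg_mul, mul_inv_cancel₀ h0]
      simp [sub_eq_add_neg, add_comm]
    rw [this]
    refine (invDisc_C (neg_ne_zero.2 h0)).mul (invDisc_one_sub ?_)
    rw [norm_inv]; exact inv_lt_one_of_one_lt₀ h

lemma norm_mulOp_C (c : ℂ) : ‖mulOp (C c)‖ ≤ ‖c‖ :=
  ContinuousLinearMap.opNorm_le_bound _ (norm_nonneg _) fun f => by
    rw [mulOp_C_apply, norm_smul]

lemma mulOp_sub (p q : ℂ[X]) : mulOp p - mulOp q = mulOp (p - q) := (map_sub _ _ _).symm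

/-- Multiplication operators by good polynomials. -/
def goodOps : Submonoid (H2 →L[ℂ] H2) where
  carrier := {T | ∃ p, Good p ∧ mulOp p = T}
  one_mem' := ⟨C 1, good_C one_ne_zero, by simp [mulOp]⟩
  mul_mem' := by
    rintro _ _ ⟨p, hp, rfl⟩ ⟨q, hq, rfl⟩
    exact ⟨p * q, hp.mul hq, mulOp_mul p q⟩

lemma C_mem_closure (c : ℂ) : mulOp (C c) ∈ goodOps.topologicalClosure := by
  refine Metric.mem_closure_iff.2 fun ε hε => ?_
  by_cases hc : c = 0
  · refine ⟨_, ⟨C (ε / 2 : ℝ), good_C (by exact_mod_cast (half_pos hε).ne'), rfl⟩, ?_⟩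
    rw [dist_eq_norm, mulOp_sub, ← C_sub]
    refine (norm_mulOp_C _).trans_lt ?_
    rw [hc, zero_sub, norm_neg, Complex.norm_real, Real.norm_of_nonneg (half_pos hε).le]
    exact half_lt_self hε
  · exact ⟨_, ⟨_, good_C hc, rfl⟩, by simpa using hε⟩

lemma lin_mem_closure (a : ℂ) : mulOp (X - C a) ∈ goodOps.topologicalClosure := by
  refine Metric.mem_closure_iff.2 fun ε hε => ?_
  suffices h : ∃ b : ℂ, b ≠ 0 ∧ ‖b‖ ≠ 1 ∧ ‖b - a‖ < ε by
    obtain ⟨b, hb0, hb1, hb⟩ := h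
    refine ⟨_, ⟨_, good_lin hb0 hb1, rfl⟩, ?_⟩
    rw [dist_eq_norm, mulOp_sub, show X - C a - (X - C b) = C (b - a) by rw [C_sub]; ring]
    exact (norm_mulOp_C _).trans_lt hb
  set τ : ℝ := min (ε / 2) (1 / 2) with hτ
  have h0 : 0 < τ := by positivity
  have h1 : τ ≤ 1 / 2 := min_le_right _ _
  have h2 : τ < ε := (min_le_left _ _).trans_lt (half_lt_self hε)
  by_cases ha0 : a = 0
  · refine ⟨(τ : ℂ), by exact_mod_cast h0.ne', ?_, ?_⟩
    · rw [Complex.norm_real, Real.norm_of_nonneg h0.le]; linarith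
    · rw [ha0, sub_zero, Complex.norm_real, Real.norm_of_nonneg h0.le]; exact h2
  by_cases ha1 : ‖a‖ = 1
  · have h3 : ‖((1 - τ : ℝ) : ℂ)‖ = 1 - τ := by
      rw [Complex.norm_real, Real.norm_of_nonneg (by linarith)]
    refine ⟨a * (1 - τ : ℝ), mul_ne_zero ha0 ?_, ?_, ?_⟩
    · exact_mod_cast (by linarith : (1 - τ) ≠ 0)
    · rw [norm_mul, ha1, h3]; linarith
    · rw [show a * ((1 - τ : ℝ) : ℂ) - a = -(a * (τ : ℂ)) by push_cast; ring, norm_neg, norm_mul, ha1,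
        Complex.norm_real, Real.norm_of_nonneg h0.le, one_mul]
      exact h2
  · exact ⟨a, ha0, ha1, by simpa using hε⟩

lemma exists_good_near (f : H2) (ε : ℝ) (hε : 0 < ε) :
    ∃ p, Good p ∧ ‖mulOp p one2 - f‖ < ε := by
  obtain ⟨p, hp⟩ := dense_mulOp_one2 f (ε / 2) (half_pos hε)
  have hmem : mulOp p ∈ goodOps.topologicalClosure := by
    rw [(IsAlgClosed.splits p).eq_prod_roots, mulOp_mul]
    refine mul_mem (C_mem_closure _) ?_
    induction p.roots using Multiset.induction_on with
    | empty => simp [mulOp]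
    | cons a s ih =>
      rw [Multiset.map_cons, Multiset.prod_cons, mulOp_mul]
      exact mul_mem (lin_mem_closure a) ih
  obtain ⟨_, ⟨q, hq, rfl⟩, hd⟩ := Metric.mem_closure_iff.1 hmem (ε / 2) (half_pos hε)
  refine ⟨q, hq, ?_⟩
  rw [dist_eq_norm] at hd
  have h1 : ‖(mulOp p - mulOp q) one2‖ < ε / 2 := by
    refine (ContinuousLinearMap.le_opNorm _ _).trans_lt ?_
    rwa [norm_one2, mul_one]
  have h2 : mulOp q one2 - f = (mulOp p one2 - f) - (mulOp p - mulOp q) one2 := by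
    change _ = _ - (mulOp p one2 - mulOp q one2); abel
  rw [h2]
  exact (norm_sub_le _ _).trans_lt (by linarith)

/-! ### A peak polynomial for a closed null set -/

lemma exists_cover {E : Set ℂ} (hE : E ⊆ sphere (0 : ℂ) 1) (hc : IsClosed E) (hn : circleNull E)
    (δ : ℝ) (hδ : 0 < δ) :
    ∃ (T : Finset ℝ) (ρ : ℝ → ℝ), (∀ θ ∈ T, 0 < ρ θ) ∧ ∑ θ ∈ T, ρ θ ≤ δ ∧
      ∀ z ∈ E, ∃ θ ∈ T, ‖z - Complex.exp (θ * Complex.I)‖ ≤ ρ θ := by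
  set A : Set ℝ := {θ : ℝ | Complex.exp (θ * Complex.I) ∈ E} with hA
  have hAc : IsClosed A := hc.preimage (by fun_prop)
  set s : Set ℝ := Set.Icc (-Real.pi) Real.pi ∩ A with hs
  have hsc : IsCompact s := isCompact_Icc.inter_right hAc
  have hs0 : volume s = 0 := measure_mono_null Set.inter_subset_right hn
  obtain ⟨t, r, -, -, hr, hcov, hsum⟩ :=
    Besicovitch.exists_closedBall_covering_tsum_measure_le (volume : Measure ℝ)
      (ε := ENNReal.ofReal δ) (by simpa using hδ) (fun _ => Set.Ioi 0) s
      (fun x _ η hη => ⟨η / 2, by simpa using hη, by constructor <;> linarith⟩)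
  -- doubling the radii turns the closed balls into an open cover of the compact set
  obtain ⟨b, hbt, hbf, hb⟩ := hsc.elim_finite_subcover_image (b := t)
    (c := fun x => ball x (2 * r x)) (fun _ _ => isOpen_ball) (by
      intro x hx
      obtain ⟨i, hi, hxi⟩ := Set.mem_iUnion₂.1 (hcov hx)
      have hri : 0 < r i := hr i hi
      exact Set.mem_iUnion₂.2 ⟨i, hi, closedBall_subset_ball (by linarith) hxi⟩)
  refine ⟨hbf.toFinset, fun x => 2 * r x, fun θ hθ => ?_, ?_, fun z hz => ?_⟩
  · have : 0 < r θ := hr θ (hbt (by simpa using hθ))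
    positivity
  · have h1 : ∑ θ ∈ hbf.toFinset, volume (closedBall θ (r θ)) ≤ ENNReal.ofReal δ := by
      rw [hs0, zero_add] at hsum
      refine le_trans ?_ hsum
      rw [tsum_subtype t (fun x => volume (closedBall x (r x)))]
      refine le_trans (Finset.sum_le_sum fun θ hθ => ?_) (ENNReal.sum_le_tsum hbf.toFinset)
      rw [Set.indicator_of_mem (hbt (by simpa using hθ))]
    simp only [Real.volume_closedBall] at h1
    rw [← ENNReal.ofReal_sum_of_nonneg] at h1
    · exact (ENNReal.ofReal_le_ofReal_iff hδ.le).1 h1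
    · intro θ hθ
      have : 0 < r θ := hr θ (hbt (by simpa using hθ))
      positivity
  · have hz1 : ‖z‖ = 1 := by simpa using hE hz
    have hz2 : Complex.exp (z.arg * Complex.I) = z := by
      have := Complex.norm_mul_exp_arg_mul_I z
      rwa [hz1, Complex.ofReal_one, one_mul] at this
    have hzs : z.arg ∈ s :=
      ⟨⟨(Complex.neg_pi_lt_arg z).le, Complex.arg_le_pi z⟩, by rw [hA, Set.mem_ofPred_eq, hz2]; exact hz⟩
    obtain ⟨θ, hθ, hzθ⟩ := Set.mem_iUnion₂.1 (hb hzs)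
    refine ⟨θ, by simpa using hθ, ?_⟩
    have h2 : z - Complex.exp (θ * Complex.I) = Complex.exp (θ * Complex.I) *
        (Complex.exp (Complex.I * ((z.arg - θ : ℝ) : ℂ)) - 1) := by
      rw [mul_sub, ← Complex.exp_add, mul_one]
      nth_rewrite 1 [← hz2]
      congr 2
      push_cast; ring
    rw [h2, norm_mul, Complex.norm_exp_ofReal_mul_I, one_mul]
    refine Real.norm_exp_I_mul_ofReal_sub_one_le.trans ?_
    rw [mem_ball, Real.dist_eq] at hzθ
    exact hzθ.le

lemma exists_poly_near {f : ℂ → ℂ} {R : ℝ} (hR : 1 < R)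
    (hf : DifferentiableOn ℂ f (closedBall 0 R)) (τ : ℝ) (hτ : 0 < τ) :
    ∃ p : ℂ[X], ∀ z : ℂ, ‖z‖ ≤ 1 → ‖p.eval z - f z‖ ≤ τ := by
  lift R to NNReal using by linarith
  have h := hf.hasFPowerSeriesOnBall (by exact_mod_cast (by linarith : (0 : ℝ) < R))
  obtain ⟨r, hr1, hr2⟩ := exists_between (show (1 : NNReal) < R by exact_mod_cast hR)
  have hu := h.tendstoUniformlyOn (r' := r) (by exact_mod_cast hr2)
  obtain ⟨N, hN⟩ := ((Metric.tendstoUniformlyOn_iff.1 hu) τ hτ).exists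
  refine ⟨∑ k ∈ Finset.range N, C ((cauchyPowerSeries f 0 R).coeff k) * X ^ k, fun z hz => ?_⟩
  have := hN z (by
    rw [mem_ball_zero_iff]
    exact hz.trans_lt (by exact_mod_cast hr1))
  rw [dist_comm, dist_eq_norm, zero_add] at this
  have h2 : (∑ k ∈ Finset.range N, C ((cauchyPowerSeries f 0 R).coeff k) * X ^ k : ℂ[X]).eval z =
      (cauchyPowerSeries f 0 R).partialSum N z := by
    rw [FormalMultilinearSeries.partialSum, eval_finsetSum]
    refine Finset.sum_congr rfl fun k _ => ?_
    rw [FormalMultilinearSeries.apply_eq_pow_smul_coeff, eval_mul, eval_C, eval_pow, eval_X,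
      smul_eq_mul, mul_comm]
  rw [h2]
  exact this.le

lemma re_div_pos {ρ : ℝ} {w : ℂ} (hρ : 0 < ρ) (hw : 0 < w.re) : 0 < ((ρ : ℂ) / w).re := by
  rw [div_eq_mul_inv, Complex.re_ofReal_mul, Complex.inv_re]
  have : 0 < Complex.normSq w := Complex.normSq_pos.2 (by rintro rfl; simp at hw)
  positivity

lemma norm_one_add_ge {w : ℂ} {x : ℝ} (hw : x ≤ w.re) : 1 + x ≤ ‖1 + w‖ := by
  refine le_trans ?_ (Complex.re_le_norm _)
  simpa using hw

/-- A rational function peaking on `E`: with `φ = M ∑ ρ / (1 + ρ - z / ω)` over arcs of centre `ω`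
and radius `ρ` covering `E`, the function `φ / (1 + φ)` is close to `1` on `E` since `Re φ ≥ M / 4`
there, and small at the origin since `φ 0 ≤ M ∑ ρ`. -/
lemma exists_peak_fun {E : Set ℂ} (hE : E ⊆ sphere (0 : ℂ) 1) (hc : IsClosed E)
    (hn : circleNull E) (δ : ℝ) (hδ : 0 < δ) :
    ∃ (R : ℝ) (f : ℂ → ℂ), 1 < R ∧ DifferentiableOn ℂ f (closedBall 0 R) ∧
      (∀ z : ℂ, ‖z‖ ≤ 1 → ‖2 * f z - 1‖ ≤ 1) ∧ (∀ z ∈ E, ‖f z - 1‖ ≤ δ) ∧ ‖f 0‖ ≤ δ := by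
  set M : ℝ := 4 / δ with hM
  have hM0 : 0 < M := by positivity
  obtain ⟨T, ρ, hρ, hsum, hcov⟩ := exists_cover hE hc hn (δ / M) (by positivity)
  obtain ⟨κ, hκ, hκ0⟩ : ∃ κ : ℝ, (∀ θ ∈ T, κ < ρ θ) ∧ 0 < κ := by
    have h1 : ∀ᶠ κ in nhdsWithin (0 : ℝ) (Set.Ioi 0), ∀ θ ∈ T, κ < ρ θ :=
      (Filter.eventually_all_finset T).2 fun θ hθ =>
        nhdsWithin_le_nhds (eventually_lt_nhds (hρ θ hθ))
    exact (h1.and self_mem_nhdsWithin).exists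
  let w : ℝ → ℂ → ℂ := fun θ z => 1 + ρ θ - z * Complex.exp (((-θ : ℝ) : ℂ) * Complex.I)
  have hwn : ∀ θ z, ‖z * Complex.exp (((-θ : ℝ) : ℂ) * Complex.I)‖ = ‖z‖ := by
    intro θ z
    rw [norm_mul, Complex.norm_exp_ofReal_mul_I, mul_one]
  have hwr : ∀ θ z, 1 + ρ θ - ‖z‖ ≤ (w θ z).re := by
    intro θ z
    have := Complex.re_le_norm (z * Complex.exp (((-θ : ℝ) : ℂ) * Complex.I))
    rw [hwn] at this
    simp only [w, Complex.sub_re, Complex.add_re, Complex.one_re, Complex.ofReal_re]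
    linarith
  let φ : ℂ → ℂ := fun z => M * ∑ θ ∈ T, (ρ θ : ℂ) / w θ z
  have hwpos : ∀ z : ℂ, ‖z‖ ≤ 1 + κ → ∀ θ ∈ T, 0 < (w θ z).re := by
    intro z hz θ hθ
    have := hwr θ z
    have := hκ θ hθ
    linarith
  have hφre : ∀ z, (φ z).re = M * ∑ θ ∈ T, ((ρ θ : ℂ) / w θ z).re := by
    intro z
    rw [Complex.re_ofReal_mul, Complex.re_sum]
  have hφ0 : ∀ z : ℂ, ‖z‖ ≤ 1 + κ → 0 ≤ (φ z).re := by
    intro z hz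
    rw [hφre]
    exact mul_nonneg hM0.le (Finset.sum_nonneg fun θ hθ =>
      (re_div_pos (hρ θ hθ) (hwpos z hz θ hθ)).le)
  have hne : ∀ z : ℂ, ‖z‖ ≤ 1 + κ → 1 + φ z ≠ 0 := by
    intro z hz
    have := norm_one_add_ge (hφ0 z hz)
    exact norm_pos_iff.1 (by linarith)
  refine ⟨1 + κ, fun z => φ z / (1 + φ z), by linarith, ?_, ?_, ?_, ?_⟩
  · have hd : DifferentiableOn ℂ φ (closedBall 0 (1 + κ)) := by
      refine DifferentiableOn.const_mul (DifferentiableOn.fun_sum fun θ hθ => ?_) _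
      refine DifferentiableOn.div (by fun_prop) (by fun_prop) fun z hz => ?_
      intro h
      have := hwpos z (by simpa using hz) θ hθ
      rw [h] at this
      simp at this
    exact hd.div (hd.const_add 1) fun z hz => hne z (by simpa using hz)
  · intro z hz
    have hz' : ‖z‖ ≤ 1 + κ := by linarith
    have h1 := hne z hz'
    have h2 : 2 * (φ z / (1 + φ z)) - 1 = (φ z - 1) / (1 + φ z) := by
      field_simp; ring
    rw [h2, norm_div]
    refine div_le_one_of_le₀ ?_ (norm_nonneg _)
    refine (sq_le_sq₀ (norm_nonneg _) (norm_nonneg _)).1 ?_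
    rw [Complex.sq_norm, Complex.sq_norm, Complex.normSq_apply, Complex.normSq_apply]
    have := hφ0 z hz'
    simp only [Complex.sub_re, Complex.add_re, Complex.one_re, Complex.sub_im, Complex.add_im,
      Complex.one_im]
    nlinarith
  · intro z hz
    have hz1 : ‖z‖ = 1 := by simpa using hE hz
    have hz' : ‖z‖ ≤ 1 + κ := by linarith
    have h1 := hne z hz'
    obtain ⟨θ, hθ, hzθ⟩ := hcov z hz
    have hr := hρ θ hθ
    have h2 : ‖w θ z‖ ≤ 2 * ρ θ := by
      have : w θ z = ρ θ + -(z - Complex.exp (θ * Complex.I)) *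
          Complex.exp (((-θ : ℝ) : ℂ) * Complex.I) := by
        have h3 : Complex.exp (θ * Complex.I) * Complex.exp (((-θ : ℝ) : ℂ) * Complex.I) = 1 := by
          rw [← Complex.exp_add]; simp
        simp only [w]
        linear_combination -h3
      rw [this]
      refine (norm_add_le _ _).trans ?_
      rw [hwn, norm_neg, Complex.norm_real, Real.norm_of_nonneg hr.le]
      linarith
    have h3 : ρ θ ≤ (w θ z).re := by
      have := hwr θ z
      linarith
    have h4 : 1 / 4 ≤ ((ρ θ : ℂ) / w θ z).re := by
      rw [div_eq_mul_inv (ρ θ : ℂ), Complex.re_ofReal_mul, Complex.inv_re, ← Complex.sq_norm]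
      have h5 : 0 < ‖w θ z‖ := by
        have := Complex.re_le_norm (w θ z)
        linarith
      rw [← mul_div_assoc, div_le_div_iff₀ (by norm_num) (by positivity)]
      nlinarith
    have h5 : M / 4 ≤ (φ z).re := by
      rw [hφre, div_eq_mul_one_div]
      refine mul_le_mul_of_nonneg_left (h4.trans ?_) hM0.le
      exact Finset.single_le_sum (f := fun θ => ((ρ θ : ℂ) / w θ z).re)
        (fun i hi => (re_div_pos (hρ i hi) (hwpos z hz' i hi)).le) hθ
    have h6 := norm_one_add_ge h5
    have h7 : φ z / (1 + φ z) - 1 = -(1 / (1 + φ z)) := by field_simp; ring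
    rw [h7, norm_neg, norm_div, norm_one, div_le_iff₀ (by linarith)]
    have h8 : δ * (1 + M / 4) = δ + 1 := by rw [hM]; field_simp
    nlinarith
  · have h1 : 1 ≤ ‖1 + φ 0‖ := by
      have := norm_one_add_ge (hφ0 0 (by simpa using by linarith))
      linarith
    have h2 : ‖φ 0‖ ≤ δ := by
      have h3 : ‖∑ θ ∈ T, (ρ θ : ℂ) / w θ 0‖ ≤ δ / M := by
        refine (norm_sum_le_of_le T fun θ hθ => ?_).trans hsum
        rw [norm_div, Complex.norm_real, Real.norm_of_nonneg (hρ θ hθ).le]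
        refine div_le_self (hρ θ hθ).le ?_
        have h4 := hwr θ 0
        have h5 := Complex.re_le_norm (w θ 0)
        have h6 := hρ θ hθ
        rw [norm_zero] at h4
        linarith
      rw [norm_mul, Complex.norm_real, Real.norm_of_nonneg hM0.le]
      calc M * _ ≤ M * (δ / M) := mul_le_mul_of_nonneg_left h3 hM0.le
        _ = δ := by field_simp
    rw [norm_div]
    exact (div_le_self (norm_nonneg _) h1).trans h2

/-- A bounded polynomial close to `1` on `E` but small in `H²`. The `H²` bound comes from
`‖2 ψ - 1‖ ≤ 1`, which expands to `‖ψ‖² ≤ Re (ψ 0)`. -/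
lemma exists_peak {E : Set ℂ} (hE : E ⊆ sphere (0 : ℂ) 1) (hc : IsClosed E)
    (hn : circleNull E) (δ : ℝ) (hδ : 0 < δ) :
    ∃ ψ : ℂ[X], (∀ z : ℂ, ‖z‖ ≤ 1 → ‖ψ.eval z‖ ≤ 2) ∧ (∀ z ∈ E, ‖ψ.eval z - 1‖ ≤ δ) ∧
      ‖mulOp ψ one2‖ ≤ δ ∧ ‖ψ.eval 0‖ ≤ δ := by
  set τ : ℝ := min (min (δ / 2) 1) (δ ^ 2 / 4) with hτ
  have hτ0 : 0 < τ := by positivity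
  have hτ1 : τ ≤ δ / 2 := (min_le_left _ _).trans (min_le_left _ _)
  have hτ2 : τ ≤ 1 := (min_le_left _ _).trans (min_le_right _ _)
  have hτ3 : τ ≤ δ ^ 2 / 4 := min_le_right _ _
  obtain ⟨R, f, hR, hf, h1, h2, h3⟩ := exists_peak_fun hE hc hn τ hτ0
  obtain ⟨ψ, hψ⟩ := exists_poly_near hR hf τ hτ0
  have hb : ∀ z : ℂ, ‖z‖ ≤ 1 → ‖(C 2 * ψ - 1).eval z‖ ≤ 1 + 2 * τ := by
    intro z hz
    have : (C 2 * ψ - 1).eval z = (2 * f z - 1) + 2 * (ψ.eval z - f z) := by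
      simp only [eval_sub, eval_mul, eval_C, eval_one]; ring
    rw [this]
    refine (norm_add_le _ _).trans (add_le_add (h1 z hz) ?_)
    rw [norm_mul, Complex.norm_ofNat]
    exact mul_le_mul_of_nonneg_left (hψ z hz) (by norm_num)
  have h00 : ‖ψ.eval 0‖ ≤ 2 * τ := by
    have : ψ.eval 0 = (ψ.eval 0 - f 0) + f 0 := by ring
    rw [this]
    refine (norm_add_le _ _).trans ?_
    have := hψ 0 (by simp)
    linarith
  refine ⟨ψ, fun z hz => ?_, fun z hz => ?_, ?_, by linarith⟩
  · have h4 := hb z hz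
    have h5 : ψ.eval z = (1 / 2 : ℂ) * ((C 2 * ψ - 1).eval z + 1) := by
      simp only [eval_sub, eval_mul, eval_C, eval_one]; ring
    rw [h5, norm_mul]
    have h6 := norm_add_le ((C 2 * ψ - 1).eval z) 1
    rw [norm_one] at h6
    rw [show ‖(1 / 2 : ℂ)‖ = 1 / 2 by norm_num]
    linarith
  · have h4 := hψ z (by simpa using (show ‖z‖ = 1 by simpa using hE hz).le)
    have : ψ.eval z - 1 = (ψ.eval z - f z) + (f z - 1) := by ring
    rw [this]
    refine (norm_add_le _ _).trans ?_
    have := h2 z hz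
    linarith
  · have h4 := norm_mulOp_le _ _ hb one2
    rw [mulOp_sub_apply, mulOp_mul_apply, mulOp_C_apply, mulOp_one_apply, norm_one2, mul_one] at h4
    set v := mulOp ψ one2 with hv
    have h5 := @norm_sub_sq ℂ _ _ _ _ ((2 : ℂ) • v) one2
    have h6 : RCLike.re (inner ℂ ((2 : ℂ) • v) one2) ≤ 4 * τ := by
      refine (RCLike.re_le_norm _).trans ?_
      rw [norm_inner_symm, inner_one2, lp.coeFn_smul, Pi.smul_apply, hv, mulOp_one2,
        coeff_zero_eq_eval_zero, norm_smul, Complex.norm_ofNat]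
      linarith
    rw [norm_smul, Complex.norm_ofNat, norm_one2] at h5
    have h7 := pow_le_pow_left₀ (norm_nonneg _) h4 2
    rw [h5] at h7
    refine (sq_le_sq₀ (norm_nonneg _) hδ.le).1 ?_
    nlinarith

/-! ### Polynomial approximation and logarithms on a closed null set -/

/-- Polynomials are uniformly dense in `C(E)`. By Stone–Weierstrass it suffices to approximate
`conj z = 1 / z`, and `(ψ z - ψ 0) / z` does so when `ψ` is a peak polynomial. -/
lemma exists_poly_approx {E : Set ℂ} (hE : E ⊆ sphere (0 : ℂ) 1) (hc : IsClosed E)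
    (hn : circleNull E) (u : C(E, ℂ)) (δ : ℝ) (hδ : 0 < δ) :
    ∃ P : ℂ[X], ∀ z : E, ‖P.eval (z : ℂ) - u z‖ ≤ δ := by
  have hEc : IsCompact E := (isCompact_sphere (0 : ℂ) 1).of_isClosed_subset hc hE
  have : CompactSpace E := isCompact_iff_compactSpace.1 hEc
  have key : ∀ v : C(E, ℂ), v ∈ (polynomialFunctions E).topologicalClosure := by
    intro v
    refine ContinuousMap.induction_on_of_compact
      (p := fun v => v ∈ (polynomialFunctions E).topologicalClosure) ?_ ?_ ?_ ?_ ?_ ?_ v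
    · intro r
      exact Subalgebra.algebraMap_mem _ r
    · refine Subalgebra.le_topologicalClosure _ ⟨X, trivial, ?_⟩
      ext z
      simp
    · refine (mem_closure_iff_nhds_basis nhds_basis_closedBall).2 fun η hη => ?_
      obtain ⟨ψ, -, h1, -, h2⟩ := exists_peak hE hc hn (η / 2) (by positivity)
      refine ⟨Polynomial.toContinuousMapOn ψ.divX E, ⟨ψ.divX, trivial, rfl⟩, ?_⟩
      rw [mem_closedBall, ContinuousMap.dist_le hη.le]
      intro z
      have hz : ‖(z : ℂ)‖ = 1 := by simpa using hE z.2
      have h3 : ψ.divX.eval (z : ℂ) * z + ψ.eval 0 = ψ.eval (z : ℂ) := by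
        conv_rhs => rw [← divX_mul_X_add ψ]
        simp [coeff_zero_eq_eval_zero]
      have h4 : star (z : ℂ) * z = 1 := by
        have := Complex.conj_mul' (z : ℂ)
        rw [hz] at this
        simpa using this
      rw [dist_eq_norm]
      change ‖ψ.divX.eval (z : ℂ) - star (z : ℂ)‖ ≤ η
      rw [← mul_one ‖_‖, ← hz, ← norm_mul]
      have h5 : (ψ.divX.eval (z : ℂ) - star (z : ℂ)) * z = (ψ.eval (z : ℂ) - 1) - ψ.eval 0 := by
        linear_combination h3 - h4
      rw [h5]
      refine (norm_sub_le _ _).trans ?_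
      have := h1 z z.2
      linarith
    · intro a b ha hb
      exact add_mem ha hb
    · intro a b ha hb
      exact mul_mem ha hb
    · intro a ha
      exact (Subalgebra.isClosed_topologicalClosure _).closure_subset
        (mem_closure_iff_frequently.2 ha)
  have h := (mem_closure_iff_nhds_basis nhds_basis_closedBall).1 (key u) δ hδ
  obtain ⟨v, ⟨P, -, rfl⟩, hv⟩ := h
  refine ⟨P, fun z => ?_⟩
  rw [mem_closedBall, ContinuousMap.dist_le hδ.le] at hv
  simpa [dist_eq_norm] using hv z

lemma exists_log_of_slitPlane {E : Set ℂ} (v : C(E, ℂ)) (hv : ∀ z, v z ∈ Complex.slitPlane) :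
    ∃ u : C(E, ℂ), ∀ z, Complex.exp (u z) = v z := by
  refine ⟨⟨fun z => Complex.log (v z), ?_⟩, fun z => ?_⟩
  · exact Continuous.clog v.continuous hv
  · exact Complex.exp_log (Complex.slitPlane_ne_zero (hv z))

lemma exists_log_const {E : Set ℂ} (c : ℂ) (hc : c ≠ 0) :
    ∃ u : C(E, ℂ), ∀ z, Complex.exp (u z) = c :=
  ⟨.const _ (Complex.log c), fun _ => Complex.exp_log hc⟩

lemma exists_log_mul {E : Set ℂ} {v w x : E → ℂ} (h : ∀ z, x z = v z * w z)
    (hv : ∃ u : C(E, ℂ), ∀ z, Complex.exp (u z) = v z)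
    (hw : ∃ u : C(E, ℂ), ∀ z, Complex.exp (u z) = w z) :
    ∃ u : C(E, ℂ), ∀ z, Complex.exp (u z) = x z := by
  obtain ⟨a, ha⟩ := hv
  obtain ⟨b, hb⟩ := hw
  exact ⟨a + b, fun z => by rw [ContinuousMap.add_apply, Complex.exp_add, ha, hb, h]⟩

lemma one_sub_mem_slitPlane {w : ℂ} (h : ‖w‖ ≤ 1) (h1 : w ≠ 1) : 1 - w ∈ Complex.slitPlane := by
  refine Or.inl ?_
  rw [Complex.sub_re, Complex.one_re, sub_pos]
  refine lt_of_le_of_ne ((Complex.re_le_norm w).trans h) fun h2 => h1 ?_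
  have h3 : w.re ^ 2 + w.im ^ 2 ≤ 1 := by
    have := pow_le_pow_left₀ (norm_nonneg _) h 2
    rw [Complex.sq_norm, Complex.normSq_apply] at this
    nlinarith
  have h4 : w.im = 0 := by
    rw [h2] at h3
    nlinarith
  exact Complex.ext h2 h4

lemma exists_notMem {E : Set ℂ} (hn : circleNull E) : ∃ ζ : ℂ, ‖ζ‖ = 1 ∧ ζ ∉ E := by
  by_contra! h
  have h1 : {θ : ℝ | Complex.exp (θ * Complex.I) ∈ E} = Set.univ :=
    Set.eq_univ_of_forall fun θ => h _ (Complex.norm_exp_ofReal_mul_I θ)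
  rw [circleNull, h1, Real.volume_univ] at hn
  exact ENNReal.top_ne_zero hn

/-- The identity has a continuous logarithm on `E`, since `E` misses a point of the circle. -/
lemma exists_log_id {E : Set ℂ} (hE : E ⊆ sphere (0 : ℂ) 1) (hn : circleNull E) :
    ∃ u : C(E, ℂ), ∀ z : E, Complex.exp (u z) = z := by
  obtain ⟨ζ, hζ, hζE⟩ := exists_notMem hn
  have hζ0 : ζ ≠ 0 := by rintro rfl; simp at hζ
  refine exists_log_mul (v := fun _ => -ζ) (w := fun z => -(z : ℂ) / ζ)
    (fun z => by field_simp) (exists_log_const _ (neg_ne_zero.2 hζ0))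
    (exists_log_of_slitPlane ⟨fun z : E => -(z : ℂ) / ζ, by fun_prop⟩ fun z => ?_)
  have hz : ‖(z : ℂ)‖ = 1 := by simpa using hE z.2
  have hw : ‖(z : ℂ) / ζ‖ = 1 := by rw [norm_div, hz, hζ, div_one]
  change -(z : ℂ) / ζ ∈ Complex.slitPlane
  rw [Complex.mem_slitPlane_iff]
  by_contra! h
  obtain ⟨h1, h2⟩ := h
  rw [neg_div, Complex.neg_re] at h1
  rw [neg_div, Complex.neg_im, neg_eq_zero] at h2
  have h3 : (z : ℂ) / ζ = 1 := by
    have h4 := Complex.abs_re_eq_norm.2 h2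
    rw [hw, abs_of_nonneg (by linarith)] at h4
    exact Complex.ext h4 h2
  rw [div_eq_one_iff_eq hζ0] at h3
  exact hζE (h3 ▸ z.2)

lemma exists_log_sub {E : Set ℂ} (hE : E ⊆ sphere (0 : ℂ) 1) (hn : circleNull E) (a : ℂ)
    (ha : a ∉ E) : ∃ u : C(E, ℂ), ∀ z : E, Complex.exp (u z) = z - a := by
  have hz1 : ∀ z : E, ‖(z : ℂ)‖ = 1 := fun z => by simpa using hE z.2
  have hz0 : ∀ z : E, (z : ℂ) ≠ 0 := fun z h => by simpa [h] using hz1 z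
  rcases le_or_gt 1 ‖a‖ with h | h
  · have ha0 : a ≠ 0 := by rintro rfl; simp at h; linarith
    refine exists_log_mul (v := fun _ => -a) (w := fun z => 1 - (z : ℂ) / a)
      (fun z => by field_simp; ring) (exists_log_const _ (neg_ne_zero.2 ha0))
      (exists_log_of_slitPlane ⟨fun z : E => 1 - (z : ℂ) / a, by fun_prop⟩ fun z => ?_)
    refine one_sub_mem_slitPlane ?_ fun h1 => ?_
    · rw [norm_div, hz1]
      exact div_le_one_of_le₀ h (norm_nonneg _)
    · rw [div_eq_one_iff_eq ha0] at h1
      exact ha (h1 ▸ z.2)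
  · refine exists_log_mul (v := fun z => (z : ℂ)) (w := fun z => 1 - a / (z : ℂ))
      (fun z => by have := hz0 z; field_simp) (exists_log_id hE hn)
      (exists_log_of_slitPlane ⟨fun z : E => 1 - a / (z : ℂ), ?_⟩ fun z => ?_)
    · exact continuous_const.sub (continuous_const.div continuous_subtype_val hz0)
    · refine one_sub_mem_slitPlane ?_ fun h1 => ?_
      · rw [norm_div, hz1, div_one]
        exact h.le
      · rw [div_eq_one_iff_eq (hz0 z)] at h1
        exact ha (h1 ▸ z.2)

lemma exists_log {E : Set ℂ} (hE : E ⊆ sphere (0 : ℂ) 1) (hn : circleNull E) (G : ℂ[X])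
    (hG : ∀ z ∈ E, G.eval z ≠ 0) : ∃ u : C(E, ℂ), ∀ z : E, Complex.exp (u z) = G.eval (z : ℂ) := by
  rcases E.eq_empty_or_nonempty with rfl | ⟨z₀, hz₀⟩
  · exact ⟨.const _ 0, fun z => z.2.elim⟩
  have hG0 : G ≠ 0 := by
    rintro rfl
    exact hG z₀ hz₀ eval_zero
  have hr : ∀ a ∈ G.roots, a ∉ E := fun a ha h => hG a h (isRoot_of_mem_roots ha)
  have key : ∀ s : Multiset ℂ, (∀ a ∈ s, a ∉ E) → ∃ u : C(E, ℂ), ∀ z : E,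
      Complex.exp (u z) = ((s.map fun a => X - C a).prod).eval (z : ℂ) := by
    intro s
    induction s using Multiset.induction_on with
    | empty => exact fun _ => ⟨.const _ 0, fun z => by simp⟩
    | cons a s ih =>
      intro hs
      refine exists_log_mul (v := fun z : E => (z : ℂ) - a) (fun z => ?_)
        (exists_log_sub hE hn a (hs a (Multiset.mem_cons_self a s)))
        (ih fun b hb => hs b (Multiset.mem_cons_of_mem hb))
      rw [Multiset.map_cons, Multiset.prod_cons, eval_mul, eval_sub, eval_X, eval_C]
  refine exists_log_mul (v := fun _ => G.leadingCoeff) (fun z => ?_)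
    (exists_log_const _ (leadingCoeff_ne_zero.2 hG0)) (key G.roots hr)
  conv_lhs => rw [(IsAlgClosed.splits G).eq_prod_roots]
  rw [eval_mul, eval_C]

/-! ### Approximately invertible polynomials prescribed on `E` -/

/-- Taylor polynomials `1 + X * K` of `exp`, with a bound on `K` that does not depend on the
precision `τ`. -/
lemma exists_exp_poly (B τ : ℝ) (hB : 0 ≤ B) (hτ : 0 < τ) :
    ∃ K : ℂ[X], ∀ w : ℂ, ‖w‖ ≤ B →
      ‖(1 + X * K).eval w - Complex.exp w‖ ≤ τ ∧ ‖K.eval w‖ ≤ Real.exp B := by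
  have h1 : ∀ᶠ n : ℕ in atTop, B / ((n + 1 : ℕ) : ℝ) ≤ 1 / 2 := by
    have : Tendsto (fun n : ℕ => B / ((n + 1 : ℕ) : ℝ)) atTop (nhds 0) :=
      (tendsto_const_div_atTop_nhds_zero_nat B).comp (tendsto_add_atTop_nat 1)
    exact this.eventually_le_const (by norm_num)
  have h2 : ∀ᶠ n : ℕ in atTop, B ^ n / (n.factorial : ℝ) ≤ τ / 2 :=
    (FloorSemiring.tendsto_pow_div_factorial_atTop B).eventually_le_const (by positivity)
  obtain ⟨N, hN1, hN2⟩ :=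
    ((tendsto_add_atTop_nat 1).eventually (h1.and h2)).exists
  refine ⟨∑ m ∈ Finset.range N, C (((m + 1).factorial : ℂ)⁻¹) * X ^ m, fun w hw => ⟨?_, ?_⟩⟩
  · have h3 : (1 + X * ∑ m ∈ Finset.range N, C (((m + 1).factorial : ℂ)⁻¹) * X ^ m : ℂ[X]).eval w =
        ∑ m ∈ Finset.range (N + 1), w ^ m / (m.factorial : ℂ) := by
      rw [Finset.sum_range_succ', eval_add, eval_one, eval_mul, eval_X, eval_finsetSum,
        Finset.mul_sum, pow_zero, Nat.factorial_zero, Nat.cast_one, div_one, add_comm]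
      congr 1
      refine Finset.sum_congr rfl fun m _ => ?_
      rw [eval_mul, eval_C, eval_pow, eval_X, pow_succ, div_eq_mul_inv]
      ring
    rw [h3, norm_sub_rev]
    refine (Complex.exp_bound' (le_trans ?_ hN1)).trans ?_
    · gcongr
    · have : ‖w‖ ^ (N + 1) / ((N + 1).factorial : ℝ) ≤ B ^ (N + 1) / ((N + 1).factorial : ℝ) := by
        gcongr
      linarith
  · rw [eval_finsetSum]
    refine (norm_sum_le_of_le _ (n := fun m => B ^ m / (m.factorial : ℝ)) fun m _ => ?_).trans
      (Real.sum_le_exp_of_nonneg hB N)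
    rw [eval_mul, eval_C, eval_pow, eval_X, norm_mul, norm_inv, norm_pow, Complex.norm_natCast,
      mul_comm, ← div_eq_mul_inv]
    gcongr
    exact Nat.le_succ m

lemma exists_bound_disc (P : ℂ[X]) : ∃ M : ℝ, 1 ≤ M ∧ ∀ z : ℂ, ‖z‖ ≤ 1 → ‖P.eval z‖ ≤ M := by
  obtain ⟨M, hM⟩ := (isCompact_closedBall (0 : ℂ) 1).exists_bound_of_continuousOn
    (f := fun z => P.eval z) P.continuous.continuousOn
  exact ⟨max 1 M, le_max_left _ _, fun z hz => (hM z (by simpa using hz)).trans (le_max_right _ _)⟩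

/-- With `P` a polynomial close to `u` on `E` and `ψ` a peak polynomial, `a` and `b` are Taylor
polynomials of `exp (P ψ)` and `exp (- P ψ)`. -/
lemma exists_unit_pair {E : Set ℂ} (hE : E ⊆ sphere (0 : ℂ) 1) (hc : IsClosed E)
    (hn : circleNull E) (u : C(E, ℂ)) (δ : ℝ) (hδ : 0 < δ) :
    ∃ a b : ℂ[X], (∀ z : ℂ, ‖z‖ ≤ 1 → ‖(a * b).eval z - 1‖ ≤ δ) ∧
      (∀ z : E, ‖a.eval (z : ℂ) - Complex.exp (u z)‖ ≤ δ) ∧ ‖mulOp b one2 - one2‖ ≤ δ := by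
  have hEc : IsCompact E := (isCompact_sphere (0 : ℂ) 1).of_isClosed_subset hc hE
  have : CompactSpace E := isCompact_iff_compactSpace.1 hEc
  set U : ℝ := Real.exp ‖u‖ with hU
  have hU0 : 0 < U := Real.exp_pos _
  have hUb : ∀ z, ‖Complex.exp (u z)‖ ≤ U := fun z =>
    (Complex.norm_exp_le_exp_norm _).trans (Real.exp_le_exp.2 (u.norm_coe_le_norm z))
  set δ₁ : ℝ := min (1 / 2) (δ / (8 * U)) with hδ₁
  have hδ₁0 : 0 < δ₁ := by positivity
  have hδ₁1 : δ₁ ≤ 1 / 2 := min_le_left _ _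
  have hδ₁2 : δ₁ * (8 * U) ≤ δ := (le_div_iff₀ (by positivity)).1 (min_le_right _ _)
  obtain ⟨P, hP⟩ := exists_poly_approx hE hc hn u δ₁ hδ₁0
  obtain ⟨M, hM1, hM⟩ := exists_bound_disc P
  have hM0 : 0 < M := by linarith
  set B : ℝ := 2 * M with hB
  set X₀ : ℝ := Real.exp B with hX₀
  have hX0 : 0 < X₀ := Real.exp_pos _
  set δ₂ : ℝ := min (δ₁ / M) (δ / (M * X₀)) with hδ₂
  have hδ₂0 : 0 < δ₂ := by positivity
  have hδ₂1 : δ₂ * M ≤ δ₁ := (le_div_iff₀ hM0).1 (min_le_left _ _)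
  have hδ₂2 : δ₂ * (M * X₀) ≤ δ := (le_div_iff₀ (by positivity)).1 (min_le_right _ _)
  obtain ⟨ψ, hψ1, hψ2, hψ3, -⟩ := exists_peak hE hc hn δ₂ hδ₂0
  set τ : ℝ := min 1 (min (δ / 2) (δ / (2 * X₀ + 1))) with hτ
  have hτ0 : 0 < τ := by positivity
  have hτ1 : τ ≤ 1 := min_le_left _ _
  have hτ2 : τ ≤ δ / 2 := (min_le_right _ _).trans (min_le_left _ _)
  have hτ3 : τ * (2 * X₀ + 1) ≤ δ :=
    (le_div_iff₀ (by positivity)).1 ((min_le_right _ _).trans (min_le_right _ _))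
  obtain ⟨K, hK⟩ := exists_exp_poly B τ (by positivity) hτ0
  have hw : ∀ z : ℂ, ‖z‖ ≤ 1 → ‖(P * ψ).eval z‖ ≤ B := by
    intro z hz
    rw [eval_mul, norm_mul, hB, mul_comm 2 M]
    exact mul_le_mul (hM z hz) (hψ1 z hz) (norm_nonneg _) hM0.le
  have hw' : ∀ z : ℂ, ‖z‖ ≤ 1 → ‖-(P * ψ).eval z‖ ≤ B := by
    intro z hz
    rw [norm_neg]
    exact hw z hz
  have hexp : ∀ w : ℂ, ‖w‖ ≤ B → ‖Complex.exp w‖ ≤ X₀ := fun w hw =>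
    (Complex.norm_exp_le_exp_norm _).trans (Real.exp_le_exp.2 hw)
  refine ⟨(1 + X * K).comp (P * ψ), (1 + X * K).comp (-(P * ψ)), fun z hz => ?_, fun z => ?_, ?_⟩
  · rw [eval_mul, eval_comp, eval_comp, eval_neg]
    set w := (P * ψ).eval z with hwz
    set A := (1 + X * K).eval w
    set D := (1 + X * K).eval (-w)
    have h1 := (hK w (hw z hz)).1
    have h2 := (hK (-w) (hw' z hz)).1
    have h3 := hexp w (hw z hz)
    have h4 := hexp (-w) (hw' z hz)
    have h5 : ‖D‖ ≤ X₀ + 1 := by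
      have := norm_add_le (D - Complex.exp (-w)) (Complex.exp (-w))
      rw [sub_add_cancel] at this
      linarith
    have h6 : A * D - 1 = (A - Complex.exp w) * D + Complex.exp w * (D - Complex.exp (-w)) := by
      have h7 : Complex.exp w * Complex.exp (-w) = 1 := by rw [← Complex.exp_add]; simp
      linear_combination h7
    rw [h6]
    refine (norm_add_le _ _).trans ?_
    rw [norm_mul, norm_mul]
    have h8 := mul_le_mul h1 h5 (norm_nonneg _) hτ0.le
    have h9 := mul_le_mul h3 h2 (norm_nonneg _) hX0.le
    nlinarith
  · have hz : ‖(z : ℂ)‖ ≤ 1 := by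
      have : ‖(z : ℂ)‖ = 1 := by simpa using hE z.2
      exact this.le
    rw [eval_comp]
    have h1 := (hK _ (hw z hz)).1
    have h2 : ‖(P * ψ).eval (z : ℂ) - u z‖ ≤ 2 * δ₁ := by
      have h3 : (P * ψ).eval (z : ℂ) - u z =
          P.eval (z : ℂ) * (ψ.eval (z : ℂ) - 1) + (P.eval (z : ℂ) - u z) := by
        rw [eval_mul]; ring
      rw [h3]
      refine (norm_add_le _ _).trans ?_
      rw [norm_mul]
      have h4 := mul_le_mul (hM z hz) (hψ2 z z.2) (norm_nonneg _) hM0.le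
      have h5 := hP z
      linarith
    set w := (P * ψ).eval (z : ℂ)
    have h3 : (1 + X * K).eval w - Complex.exp (u z) = ((1 + X * K).eval w - Complex.exp w) +
        Complex.exp (u z) * (Complex.exp (w - u z) - 1) := by
      rw [mul_sub, ← Complex.exp_add, add_sub_cancel]
      ring
    rw [h3]
    refine (norm_add_le _ _).trans ?_
    rw [norm_mul]
    have h4 := Complex.norm_exp_sub_one_le (h2.trans (by linarith))
    have h5 := mul_le_mul (hUb z) (h4.trans (mul_le_mul_of_nonneg_left h2 (by norm_num)))
      (norm_nonneg _) hU0.le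
    linarith
  · have h1 : (1 + X * K).comp (-(P * ψ)) = 1 + (-P * K.comp (-(P * ψ))) * ψ := by
      rw [add_comp, one_comp, mul_comp, X_comp]
      ring
    rw [h1, mulOp_add_apply, mulOp_one_apply, add_sub_cancel_left, mulOp_mul_apply]
    refine (norm_mulOp_le _ (M * X₀) (fun z hz => ?_) _).trans ?_
    · rw [eval_mul, eval_neg, norm_mul, norm_neg, eval_comp, eval_neg]
      exact mul_le_mul (hM z hz) (hK _ (hw' z hz)).2 (norm_nonneg _) hM0.le
    · calc M * X₀ * ‖mulOp ψ one2‖ ≤ M * X₀ * δ₂ :=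
            mul_le_mul_of_nonneg_left hψ3 (by positivity)
        _ ≤ δ := by linarith

/-! ### Choice of the approximant -/

/-- Let `E ⊆ 𝕋` be closed of measure zero and `g` a polynomial with no
zeros on `E`. For every `f ∈ H²` and `ε > 0` there are `F ∈ H² \ {0}` and `m ∈ ℕ` with
`‖F − f‖_{H²} < ε` and `‖Q_m(1/F) − g‖_{C(E)} < ε`. -/
theorem exists_approx_with_opa_close (E : Set ℂ) (hE : E ⊆ sphere (0 : ℂ) 1)
    (hEclosed : IsClosed E) (hEnull : circleNull E)
    (g : Polynomial ℂ) (hg : ∀ z ∈ E, g.eval z ≠ 0)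
    (f : H2) (ε : ℝ) (hε : 0 < ε) :
    ∃ (F : H2) (m : ℕ), F ≠ 0 ∧ ‖F - f‖ < ε ∧
      supDist E (fun z => (opa m F).eval z) (fun z => g.eval z) < ε := by
  obtain ⟨p, ⟨hp0, d, hd, hpd⟩, hpf⟩ := exists_good_near f (ε / 2) (half_pos hε)
  have hd0 : d.coeff 0 ≠ 0 := by
    rw [coeff_zero_eq_eval_zero]
    exact hd.eval_ne_zero (by simp)
  set c : ℂ := (starRingEnd ℂ) (p.coeff 0 / d.coeff 0) with hc
  have hc0 : c ≠ 0 := by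
    rw [hc, _root_.map_ne_zero]
    exact div_ne_zero hp0 hd0
  have hcn : 0 < ‖c‖ := norm_pos_iff.2 hc0
  have hE1 : ∀ z ∈ E, ‖z‖ ≤ 1 := fun z hz => by
    have : ‖z‖ = 1 := by simpa using hE hz
    exact this.le
  -- the approximant will be `c * t * a` with `d * t ≈ 1`, so `a` should be close to `g * d / c`
  set G₀ : ℂ[X] := C c⁻¹ * g * d with hG₀
  have hG₀E : ∀ z ∈ E, G₀.eval z ≠ 0 := fun z hz => by
    rw [hG₀, eval_mul, eval_mul, eval_C]
    exact mul_ne_zero (mul_ne_zero (inv_ne_zero hc0) (hg z hz)) (hd.eval_ne_zero (hE1 z hz))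
  obtain ⟨u, hu⟩ := exists_log hE hEnull G₀ hG₀E
  obtain ⟨V, hV1, hV⟩ := exists_bound_disc G₀
  -- a lower bound for `d` on the disc, from an approximate inverse
  obtain ⟨L, hL0, hL⟩ : ∃ L : ℝ, 0 < L ∧ ∀ z : ℂ, ‖z‖ ≤ 1 → 1 ≤ L * ‖d.eval z‖ := by
    obtain ⟨t, ht⟩ := hd (1 / 2) (by norm_num)
    obtain ⟨T, hT1, hT⟩ := exists_bound_disc t
    refine ⟨2 * T, by linarith, fun z hz => ?_⟩
    have h1 := ht z hz
    have h2 := norm_sub_norm_le 1 (1 - (d * t).eval z)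
    rw [sub_sub_cancel, norm_one, norm_sub_rev, eval_mul, norm_mul] at h2
    rw [eval_mul] at h1
    have h3 := mul_le_mul_of_nonneg_left (hT z hz) (norm_nonneg (d.eval z))
    linarith
  set N : ℝ := ‖mulOp p‖ with hN
  have hN0 : 0 ≤ N := norm_nonneg _
  set κ : ℝ := min (1 / 8) (min (ε / (4 * ‖c‖ * L)) (ε / (16 * (N + 1)))) with hκ
  have hκ0 : 0 < κ := by positivity
  have hκ1 : κ ≤ 1 / 8 := min_le_left _ _
  have hκ2 : κ * (4 * ‖c‖ * L) ≤ ε :=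
    (le_div_iff₀ (by positivity)).1 ((min_le_right _ _).trans (min_le_left _ _))
  have hκ3 : κ * (16 * (N + 1)) ≤ ε :=
    (le_div_iff₀ (by positivity)).1 ((min_le_right _ _).trans (min_le_right _ _))
  obtain ⟨a, b, hab, ha, hb⟩ := exists_unit_pair hE hEclosed hEnull u κ hκ0
  obtain ⟨t, ht⟩ := hd (κ / (V + 1)) (by positivity)
  have htκ : κ / (V + 1) ≤ κ := div_le_self hκ0.le (by linarith)
  have hs : ∀ z : ℂ, ‖z‖ ≤ 1 → ‖(d * (t * a) * b).eval z - 1‖ ≤ 3 * κ := by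
    intro z hz
    have h1 : (d * (t * a) * b).eval z - 1 =
        ((d * t).eval z - 1) * (a * b).eval z + ((a * b).eval z - 1) := by
      simp only [eval_mul]; ring
    have h2 := hab z hz
    have h3 : ‖(a * b).eval z‖ ≤ 2 := by
      have := norm_add_le ((a * b).eval z - 1) 1
      rw [sub_add_cancel, norm_one] at this
      linarith
    rw [h1]
    refine (norm_add_le _ _).trans ?_
    rw [norm_mul]
    have h4 := mul_le_mul ((ht z hz).trans htκ) h3 (norm_nonneg _) hκ0.le
    linarith
  obtain ⟨G, hG, hG1⟩ := exists_inv (d * (t * a)) b (3 * κ) κ (by positivity) (by linarith) hs hb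
  have hG2 : ‖G - one2‖ ≤ 8 * κ := by
    refine hG1.trans ?_
    rw [div_le_iff₀ (by linarith)]
    nlinarith
  refine ⟨mulOp p G, (t * a).natDegree, fun hF => ?_, ?_, ?_⟩
  · have h1 := mulOp_apply_zero p G
    have h2 := mulOp_apply_zero (d * (t * a)) G
    rw [hF] at h1
    rw [hG, one2_apply, if_pos rfl] at h2
    have h3 : G 0 = 0 := by
      have h4 : p.coeff 0 * G 0 = 0 := by rw [← h1]; rfl
      exact (mul_eq_zero.1 h4).resolve_left hp0
    rw [h3, mul_zero] at h2
    exact one_ne_zero h2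
  · have h1 : mulOp p G - f = mulOp p (G - one2) + (mulOp p one2 - f) := by
      rw [map_sub]; abel
    rw [h1]
    refine (norm_add_le _ _).trans_lt ?_
    have h2 := ((mulOp p).le_opNorm (G - one2)).trans (mul_le_mul_of_nonneg_left hG2 hN0)
    nlinarith
  · rw [opa_eq p d (t * a) G hpd hG hp0]
    refine lt_of_le_of_lt (Real.iSup_le (a := ε / 2) (fun z => ?_) (by positivity)) (half_lt_self hε)
    have hz := hE1 z z.2
    have h1 : d.eval (z : ℂ) * ((C c * (t * a)).eval (z : ℂ) - g.eval (z : ℂ)) =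
        c * (((d * t).eval (z : ℂ) - 1) * a.eval (z : ℂ) +
          (a.eval (z : ℂ) - G₀.eval (z : ℂ))) := by
      simp only [hG₀, eval_mul, eval_C]
      field_simp
      ring
    have h2 := ha z
    rw [hu] at h2
    have h3 : ‖a.eval (z : ℂ)‖ ≤ V + 1 := by
      have := norm_add_le (a.eval (z : ℂ) - G₀.eval (z : ℂ)) (G₀.eval (z : ℂ))
      rw [sub_add_cancel] at this
      have := hV z hz
      linarith
    have h4 : ‖d.eval (z : ℂ)‖ * ‖(C c * (t * a)).eval (z : ℂ) - g.eval (z : ℂ)‖ ≤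
        ‖c‖ * (2 * κ) := by
      rw [← norm_mul, h1, norm_mul]
      refine mul_le_mul_of_nonneg_left ((norm_add_le _ _).trans ?_) (norm_nonneg _)
      rw [norm_mul]
      have h5 := mul_le_mul (ht z hz) h3 (norm_nonneg _) (by positivity)
      rw [div_mul_cancel₀ _ (by linarith)] at h5
      linarith
    have h5 := mul_le_mul_of_nonneg_right (hL z hz)
      (norm_nonneg ((C c * (t * a)).eval (z : ℂ) - g.eval (z : ℂ)))
    have h6 := mul_le_mul_of_nonneg_left h4 hL0.le
    rw [one_mul, mul_assoc] at h5
    linarith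

end
end

section
/- Let E ⊂ 𝕋 be a closed set of Lebesgue (arc-length) measure zero and let U be an open neighbourhood of E in ℂ. For every ε > 0 there exists a function h in the disc algebra A(𝔻) such that |h(z)| ≤ 2 for all z in the closed unit disc, |h(z)| < ε for all z in the closed unit disc outside U, and h(z) = 1 for all z ∈ E. -/
/-!
The function `h` is Fatou's peak function `G / (1 + G)`, where `G` is holomorphic on the open disc,
continuous on the closed disc away from `E`, has non-negative real part, and `Re G → +∞` at `E`.
For such a `G` one has `‖h‖ ≤ 2` and `‖h‖ ≤ ‖G‖`, and `h` extends continuously by `1` to `E`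
because `1 - h = 1 / (1 + G)`.

To build `G`, attach to `w ∈ 𝕋` and `δ > 0` the function
 `peakTerm w δ z = δ / (1 + δ - conj w * z)`.
On the closed disc its real part is non-negative, and at least `1/4` within distance `δ` of `w`
(`quarter_le_re_peakTerm`), while `‖peakTerm w δ z‖ ≤ 2 δ / ‖z - w‖` (`norm_peakTerm_le`).
As `E` has zero one-dimensional Hausdorff measure, it can be covered infinitely often by discs
`ball w δ` with centres in `E` and arbitrarily small total radius `∑ δ < η`
(`exists_repeated_cover`). Then `G = ∑ peakTerm w δ` blows up at `E`, converges uniformly at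
positive distance from `E`, and is at most `2 η / d` at distance `≥ d` from `E`, so a small `η` makes
`h` small outside `U`.
-/

open MeasureTheory Filter Metric Polynomial

noncomputable section

open scoped ENNReal NNReal ComplexConjugate Topology

/-- The function `δ / (1 + δ - conj w * z)` of `z`, concentrated near the boundary point `w` at scale `δ`
and with its pole at `(1 + δ) w`, outside the closed disc. -/
def peakTerm (w : ℂ) (δ : ℝ) (z : ℂ) : ℂ := δ / (1 + δ - conj w * z)

lemma le_re_denom {w z : ℂ} {δ : ℝ} (hw : ‖w‖ = 1) (hz : ‖z‖ ≤ 1) :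
    δ ≤ (1 + δ - conj w * z : ℂ).re := by
  have h1 : (conj w * z).re ≤ 1 := by
    refine (Complex.re_le_norm _).trans ?_
    rw [norm_mul, RCLike.norm_conj, hw, one_mul]
    exact hz
  rw [Complex.sub_re, Complex.add_re, Complex.one_re, Complex.ofReal_re]
  linarith

lemma denom_ne_zero {w z : ℂ} {δ : ℝ} (hw : ‖w‖ = 1) (hδ : 0 < δ) (hz : ‖z‖ ≤ 1) :
    (1 + δ - conj w * z : ℂ) ≠ 0 := by
  intro h
  have := le_re_denom (δ := δ) hw hz
  rw [h, Complex.zero_re] at this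
  linarith

lemma norm_one_sub_conj_mul {w : ℂ} (hw : ‖w‖ = 1) (z : ℂ) : ‖1 - conj w * z‖ = ‖z - w‖ := by
  have h1 : conj w * w = 1 := by
    rw [mul_comm, Complex.mul_conj, Complex.normSq_eq_norm_sq, hw]; simp
  have : 1 - conj w * z = conj w * (w - z) := by rw [mul_sub, h1]
  rw [this, norm_mul, RCLike.norm_conj, hw, one_mul, norm_sub_rev]

lemma re_peakTerm_eq (w z : ℂ) (δ : ℝ) :
    (peakTerm w δ z).re
      = δ * ((1 + δ - conj w * z : ℂ).re / ‖(1 + δ - conj w * z : ℂ)‖ ^ 2) := by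
  rw [peakTerm, div_eq_mul_inv, Complex.re_ofReal_mul, Complex.inv_re, Complex.normSq_eq_norm_sq]

lemma re_peakTerm_nonneg {w z : ℂ} {δ : ℝ} (hw : ‖w‖ = 1) (hδ : 0 < δ) (hz : ‖z‖ ≤ 1) :
    0 ≤ (peakTerm w δ z).re := by
  rw [re_peakTerm_eq]
  have := le_re_denom (δ := δ) hw hz
  have : 0 ≤ (1 + δ - conj w * z : ℂ).re := hδ.le.trans this
  positivity

/-- Near its centre the numerator `δ` of `peakTerm` is comparable with the denominator, which has
real part at least `δ` and modulus at most `2 δ`. -/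
lemma quarter_le_re_peakTerm {w z : ℂ} {δ : ℝ} (hw : ‖w‖ = 1) (hδ : 0 < δ) (hz : ‖z‖ ≤ 1)
    (hzw : ‖z - w‖ < δ) : 1 / 4 ≤ (peakTerm w δ z).re := by
  rw [re_peakTerm_eq]
  have h1 := le_re_denom (δ := δ) hw hz
  have h2 : ‖(1 + δ - conj w * z : ℂ)‖ ≤ 2 * δ := by
    have : (1 + δ - conj w * z : ℂ) = (1 - conj w * z) + (δ : ℂ) := by ring
    rw [this]
    refine (norm_add_le _ _).trans ?_
    rw [norm_one_sub_conj_mul hw, Complex.norm_of_nonneg hδ.le]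
    linarith
  have h3 : 0 < ‖(1 + δ - conj w * z : ℂ)‖ := norm_pos_iff.2 (denom_ne_zero hw hδ hz)
  rw [← mul_div_assoc, div_le_div_iff₀ (by norm_num) (by positivity)]
  nlinarith

lemma norm_peakTerm_le {w z : ℂ} {δ d : ℝ} (hw : ‖w‖ = 1) (hδ : 0 < δ) (hz : ‖z‖ ≤ 1)
    (hd : 0 < d) (hzw : d ≤ ‖z - w‖) : ‖peakTerm w δ z‖ ≤ δ * (2 / d) := by
  have h3 : 0 < ‖(1 + δ - conj w * z : ℂ)‖ := norm_pos_iff.2 (denom_ne_zero hw hδ hz)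
  have h1 : δ ≤ ‖(1 + δ - conj w * z : ℂ)‖ := (le_re_denom hw hz).trans (Complex.re_le_norm _)
  have h2 : ‖z - w‖ ≤ ‖(1 + δ - conj w * z : ℂ)‖ + δ := by
    rw [← norm_one_sub_conj_mul hw]
    have : (1 - conj w * z : ℂ) = (1 + δ - conj w * z) - (δ : ℂ) := by ring
    rw [this]
    refine (norm_sub_le _ _).trans ?_
    rw [Complex.norm_of_nonneg hδ.le]
  rw [peakTerm, norm_div, Complex.norm_of_nonneg hδ.le, ← mul_div_assoc,
    div_le_div_iff₀ h3 hd]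
  nlinarith

lemma differentiableOn_peakTerm {w : ℂ} {δ : ℝ} (hw : ‖w‖ = 1) (hδ : 0 < δ) :
    DifferentiableOn ℂ (peakTerm w δ) (closedBall 0 1) := by
  intro z hz
  refine DifferentiableAt.differentiableWithinAt ?_
  unfold peakTerm
  exact (differentiableAt_const _).div (by fun_prop)
    (denom_ne_zero hw hδ (mem_closedBall_zero_iff.1 hz))

/-- An arc-length null subset of the circle is the 1-Lipschitz image under `θ ↦ exp (θ I)` of a
Lebesgue null set. -/
lemma hausdorffMeasure_eq_zero {E : Set ℂ} (hE : E ⊆ sphere (0 : ℂ) 1) (hEnull : circleNull E) :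
    μH[1] E = 0 := by
  have hlip : LipschitzWith 1 (fun θ : ℝ => Complex.exp (θ * Complex.I)) := by
    refine lipschitzWith_of_nnnorm_deriv_le (𝕜 := ℝ) (by fun_prop) fun x => ?_
    have : HasDerivAt (fun θ : ℝ => Complex.exp (θ * Complex.I))
        (Complex.exp (x * Complex.I) * (1 * Complex.I)) x :=
      ((Complex.ofRealCLM.hasDerivAt (x := x)).mul_const Complex.I).cexp
    rw [this.deriv, ← NNReal.coe_le_coe]
    simp
  have h := hlip.hausdorffMeasure_image_le (d := 1) zero_le_one
    {θ : ℝ | Complex.exp (θ * Complex.I) ∈ E}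
  rw [hausdorffMeasure_real, hEnull, mul_zero] at h
  refine measure_mono_null (fun z hz => ?_) (nonpos_iff_eq_zero.1 h)
  obtain ⟨θ, hθ⟩ := (Complex.norm_eq_one_iff z).1 (mem_sphere_zero_iff_norm.1 (hE hz))
  exact ⟨θ, by simpa [hθ] using hz, hθ⟩

/-- A set of zero one-dimensional Hausdorff measure is covered by discs centred on it, of
arbitrarily small total radius. -/
lemma exists_cover_s10 {E : Set ℂ} (hne : E.Nonempty) (hE : μH[1] E = 0) {η : ℝ≥0∞} (hη : η ≠ 0) :
    ∃ (w : ℕ → ℂ) (δ : ℕ → ℝ≥0), (∀ n, w n ∈ E) ∧ (∀ n, 0 < δ n) ∧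
      (∀ z ∈ E, ∃ n, ‖z - w n‖ < δ n) ∧ ∑' n, (δ n : ℝ≥0∞) < η := by
  classical
  have hη2 : η / 2 ≠ 0 := (ENNReal.half_pos hη).ne'
  obtain ⟨e, he0, he⟩ := ENNReal.exists_pos_sum_of_countable hη2 ℕ
  -- A covering of `E` by sets of small total diameter.
  obtain ⟨t, htE, ht1, hts⟩ : ∃ t : ℕ → Set ℂ, E ⊆ ⋃ n, t n ∧ (∀ n, ediam (t n) ≤ 1) ∧
      ∑' n, ⨆ _ : (t n).Nonempty, ediam (t n) ^ (1 : ℝ) < η / 2 := by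
    rw [Measure.hausdorffMeasure_apply] at hE
    have h := le_iSup₂ (f := fun (r : ℝ≥0∞) (_ : 0 < r) =>
        ⨅ (t : ℕ → Set ℂ) (_ : E ⊆ ⋃ n, t n) (_ : ∀ n, ediam (t n) ≤ r),
          ∑' n, ⨆ _ : (t n).Nonempty, ediam (t n) ^ (1 : ℝ)) (1 : ℝ≥0∞) one_pos
    rw [hE] at h
    have h' := h.trans_lt (pos_iff_ne_zero.2 hη2)
    simp only [iInf_lt_iff] at h'
    obtain ⟨t, h1, h2, h3⟩ := h'
    exact ⟨t, h1, h2, h3⟩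
  have hfin : ∀ n, ediam (t n) ≠ ∞ := fun n => ((ht1 n).trans_lt ENNReal.one_lt_top).ne
  obtain ⟨z₀, hz₀⟩ := hne
  have hc : ∀ n, ∃ w ∈ E, (t n ∩ E).Nonempty → w ∈ t n := by
    intro n
    by_cases h : (t n ∩ E).Nonempty
    · obtain ⟨x, hx⟩ := h
      exact ⟨x, hx.2, fun _ => hx.1⟩
    · exact ⟨z₀, hz₀, fun h' => absurd h' h⟩
  choose w hwE hwt using hc
  -- The extra radius `e n` makes open discs suffice.
  refine ⟨w, fun n => (ediam (t n)).toNNReal + e n, hwE,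
    fun n => add_pos_of_nonneg_of_pos zero_le (he0 n), fun z hz => ?_, ?_⟩
  · obtain ⟨n, hn⟩ := Set.mem_iUnion.1 (htE hz)
    refine ⟨n, ?_⟩
    have h1 : edist z (w n) ≤ ediam (t n) := edist_le_ediam_of_mem hn (hwt n ⟨z, hn, hz⟩)
    rw [← dist_eq_norm, dist_edist, NNReal.coe_add]
    have h2 := ENNReal.toReal_mono (hfin n) h1
    have h3 : (0 : ℝ) < e n := he0 n
    change _ < (ediam (t n)).toReal + (e n : ℝ)
    linarith
  · have h1 : ∀ n, (((ediam (t n)).toNNReal + e n : ℝ≥0) : ℝ≥0∞)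
        = (⨆ _ : (t n).Nonempty, ediam (t n) ^ (1 : ℝ)) + e n := by
      intro n
      rw [ENNReal.coe_add, ENNReal.coe_toNNReal (hfin n), ENNReal.rpow_one]
      congr 1
      by_cases h : (t n).Nonempty
      · simp [h]
      · simp [Set.not_nonempty_iff_eq_empty.1 h]
    simp only [h1]
    rw [ENNReal.tsum_add]
    exact (ENNReal.add_lt_add hts he).trans_eq (ENNReal.add_halves η)

/-- A sequence of covers as in `exists_cover`, one for each `k`, whose radii have small total sum. -/
lemma exists_repeated_cover {E : Set ℂ} (hne : E.Nonempty) (hE : μH[1] E = 0) {η : ℝ}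
    (hη : 0 < η) :
    ∃ (w : ℕ × ℕ → ℂ) (δ : ℕ × ℕ → ℝ), (∀ p, w p ∈ E) ∧ (∀ p, 0 < δ p) ∧
      (∀ z ∈ E, ∀ k, ∃ n, ‖z - w (k, n)‖ < δ (k, n)) ∧ Summable δ ∧ ∑' p, δ p < η := by
  obtain ⟨e, he0, he⟩ :=
    ENNReal.exists_pos_sum_of_countable (ENNReal.ofReal_pos.2 hη).ne' ℕ
  choose w δ hw hδ hcov hsum using
    fun k => exists_cover_s10 hne hE (ENNReal.coe_pos.2 (he0 k)).ne'
  have hlt : ∑' p : ℕ × ℕ, (δ p.1 p.2 : ℝ≥0∞) < ENNReal.ofReal η := by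
    rw [ENNReal.tsum_prod (f := fun k n => (δ k n : ℝ≥0∞))]
    exact (ENNReal.tsum_le_tsum fun k => (hsum k).le).trans_lt he
  have hs : Summable fun p : ℕ × ℕ => δ p.1 p.2 :=
    ENNReal.tsum_coe_ne_top_iff_summable.1 (hlt.trans ENNReal.ofReal_lt_top).ne
  refine ⟨fun p => w p.1 p.2, fun p => δ p.1 p.2, fun p => hw _ _, fun p => hδ _ _,
    fun z hz k => hcov k z hz, NNReal.summable_coe.2 hs, ?_⟩
  rw [← ENNReal.coe_tsum hs, ENNReal.ofReal, ENNReal.coe_lt_coe, ← NNReal.coe_lt_coe,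
    Real.coe_toNNReal _ hη.le, NNReal.coe_tsum] at hlt
  exact hlt

/-- The function `G` from which the peak function `G / (1 + G)` is formed. The bound in the third
clause of the conclusion contains the smallness away from `E`; the last clause says that `Re G`
tends to `+∞` at the points of `E`. -/
lemma exists_infinite_on {E : Set ℂ} (hne : E.Nonempty) (hE : E ⊆ sphere (0 : ℂ) 1)
    (hEclosed : IsClosed E) (hEnull : circleNull E) {η : ℝ} (hη : 0 < η) :
    ∃ G : ℂ → ℂ, ContinuousOn G (closedBall 0 1 \ E) ∧ DifferentiableOn ℂ G (ball 0 1) ∧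
      (∀ d > 0, ∀ z ∈ closedBall (0 : ℂ) 1, (∀ w ∈ E, d ≤ ‖z - w‖) → ‖G z‖ ≤ η * (2 / d)) ∧
      (∀ z ∈ closedBall (0 : ℂ) 1 \ E, 0 ≤ (G z).re) ∧
      (∀ z ∈ E, ∀ K : ℕ, ∀ᶠ y in 𝓝 z, y ∈ closedBall (0 : ℂ) 1 \ E → K * (1 / 4) ≤ (G y).re) := by
  obtain ⟨w, δ, hwE, hδ, hcov, hs, hlt⟩ :=
    exists_repeated_cover hne (hausdorffMeasure_eq_zero hE hEnull) hη
  have hw : ∀ p, ‖w p‖ = 1 := fun p => mem_sphere_zero_iff_norm.1 (hE (hwE p))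
  have hbound : ∀ d > 0, ∀ p, ∀ z ∈ closedBall (0 : ℂ) 1, (∀ w ∈ E, d ≤ ‖z - w‖) →
      ‖peakTerm (w p) (δ p) z‖ ≤ δ p * (2 / d) := fun d hd p z hz h =>
    norm_peakTerm_le (hw p) (hδ p) (mem_closedBall_zero_iff.1 hz) hd (h _ (hwE p))
  have hsd : ∀ d : ℝ, Summable fun p => δ p * (2 / d) := fun d => hs.mul_right _
  have hfar : ∀ z ∉ E, ∃ d > 0, ∃ V, IsOpen V ∧ z ∈ V ∧ ∀ y ∈ V, ∀ w ∈ E, d ≤ ‖y - w‖ := by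
    intro z hz
    have hpos : 0 < infDist z E := (hEclosed.notMem_iff_infDist_pos hne).1 hz
    refine ⟨infDist z E / 2, half_pos hpos, {y | infDist z E / 2 < infDist y E},
      isOpen_lt continuous_const (continuous_infDist_pt E), half_lt_self hpos,
      fun y hy w hw => ?_⟩
    rw [← dist_eq_norm]
    exact (le_of_lt hy).trans (infDist_le_dist_of_mem hw)
  have hsummable : ∀ z ∈ closedBall (0 : ℂ) 1 \ E,
      Summable fun p => peakTerm (w p) (δ p) z := by
    intro z hz
    obtain ⟨d, hd, V, -, hzV, hV⟩ := hfar z hz.2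
    exact (hsd d).of_norm_bounded fun p => hbound d hd p z hz.1 (hV z hzV)
  have hre : ∀ z ∈ closedBall (0 : ℂ) 1 \ E, ∀ p, 0 ≤ (peakTerm (w p) (δ p) z).re :=
    fun z hz p => re_peakTerm_nonneg (hw p) (hδ p) (mem_closedBall_zero_iff.1 hz.1)
  refine ⟨fun z => ∑' p, peakTerm (w p) (δ p) z, ?_, ?_, ?_, ?_, ?_⟩
  · intro z hz
    obtain ⟨d, hd, V, hVo, hzV, hV⟩ := hfar z hz.2
    have hc : ContinuousOn (fun z => ∑' p, peakTerm (w p) (δ p) z) (closedBall 0 1 ∩ V) :=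
      continuousOn_tsum
        (fun p => (differentiableOn_peakTerm (hw p) (hδ p)).continuousOn.mono
          Set.inter_subset_left) (hsd d) fun p y hy => hbound d hd p y hy.1 (hV y hy.2)
    refine (hc z ⟨hz.1, hzV⟩).mono_of_mem_nhdsWithin ?_
    exact Filter.inter_mem (mem_of_superset self_mem_nhdsWithin Set.sdiff_subset)
      (mem_nhdsWithin_of_mem_nhds (hVo.mem_nhds hzV))
  · intro z hz
    have hzE : z ∉ E := fun h =>
      (mem_ball_zero_iff.1 hz).ne (mem_sphere_zero_iff_norm.1 (hE h))
    obtain ⟨d, hd, V, hVo, hzV, hV⟩ := hfar z hzE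
    have hc : DifferentiableOn ℂ (fun z => ∑' p, peakTerm (w p) (δ p) z) (ball 0 1 ∩ V) :=
      Complex.differentiableOn_tsum_of_summable_norm (hsd d)
        (fun p => (differentiableOn_peakTerm (hw p) (hδ p)).mono
          (Set.inter_subset_left.trans ball_subset_closedBall)) (isOpen_ball.inter hVo)
        fun p y hy => hbound d hd p y (ball_subset_closedBall hy.1) (hV y hy.2)
    exact (hc.differentiableAt
      ((isOpen_ball.inter hVo).mem_nhds ⟨hz, hzV⟩)).differentiableWithinAt
  · intro d hd z hz h
    refine (tsum_of_norm_bounded (hsd d).hasSum fun p => hbound d hd p z hz h).trans ?_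
    rw [tsum_mul_right]
    gcongr
  · intro z hz
    change 0 ≤ (∑' p, peakTerm (w p) (δ p) z).re
    rw [Complex.re_tsum (hsummable z hz)]
    exact tsum_nonneg (hre z hz)
  · intro z hz K
    -- Each of the first `K` covers contributes a term with real part at least `1 / 4` near `z`.
    choose n hn using hcov z hz
    have hev : ∀ᶠ y in 𝓝 z, ∀ k ∈ Finset.range K, ‖y - w (k, n k)‖ < δ (k, n k) := by
      rw [Filter.eventually_all_finset]
      intro k _
      have hcont : Continuous fun y : ℂ => ‖y - w (k, n k)‖ := by fun_prop
      exact hcont.continuousAt.eventually_lt continuousAt_const (hn k)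
    filter_upwards [hev] with y hy hyE
    rw [Complex.re_tsum (hsummable y hyE)]
    have hinj : Function.Injective fun k => (k, n k) := fun a b h => congrArg Prod.fst h
    calc (K : ℝ) * (1 / 4) = ∑ k ∈ Finset.range K, (1 / 4 : ℝ) := by simp
      _ ≤ ∑ k ∈ Finset.range K, (peakTerm (w (k, n k)) (δ (k, n k)) y).re :=
        Finset.sum_le_sum fun k hk =>
          quarter_le_re_peakTerm (hw _) (hδ _) (mem_closedBall_zero_iff.1 hyE.1) (hy k hk)
      _ = ∑ p ∈ (Finset.range K).map ⟨_, hinj⟩, (peakTerm (w p) (δ p) y).re := by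
        rw [Finset.sum_map]; rfl
      _ ≤ _ := ((Complex.hasSum_re (hsummable y hyE).hasSum).summable).sum_le_tsum _
        fun p _ => hre y hyE p

/-- (Rudin-type lemma.) Let `E ⊆ 𝕋` be closed of arc-length measure
zero and `U ⊇ E` open. For every `ε > 0` there is `h` in the disc algebra `A(𝔻)` with
`|h| ≤ 2` on the closed disc, `|h| < ε` on the closed disc minus `U`, and `h = 1` on `E`. -/
theorem rudin_function (E : Set ℂ) (hE : E ⊆ sphere (0 : ℂ) 1) (hEclosed : IsClosed E)
    (hEnull : circleNull E) (U : Set ℂ) (hU : IsOpen U) (hEU : E ⊆ U)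
    (ε : ℝ) (hε : 0 < ε) :
    ∃ h : ℂ → ℂ,
      ContinuousOn h (closedBall (0 : ℂ) 1) ∧
      DifferentiableOn ℂ h (ball (0 : ℂ) 1) ∧
      (∀ z ∈ closedBall (0 : ℂ) 1, ‖h z‖ ≤ 2) ∧
      (∀ z ∈ closedBall (0 : ℂ) 1 \ U, ‖h z‖ < ε) ∧
      (∀ z ∈ E, h z = 1) := by
  classical
  rcases E.eq_empty_or_nonempty with rfl | hne
  · exact ⟨fun _ => 0, continuousOn_const, differentiableOn_const _, by simp, by simp [hε],
      by simp⟩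
  have hEcomp : IsCompact E := (isCompact_sphere (0 : ℂ) 1).of_isClosed_subset hEclosed hE
  obtain ⟨d, hd, hdU⟩ := hEcomp.exists_thickening_subset_open hU hEU
  -- The choice of `η` makes the bound `η * (2 / d)` of `G` off `U` equal to `ε / 2`.
  obtain ⟨G, hGc, hGd, hGb, hGre, hGE⟩ :=
    exists_infinite_on hne hE hEclosed hEnull (η := ε * d / 4) (by positivity)
  have hone : ∀ z ∈ closedBall (0 : ℂ) 1 \ E, 1 + (G z).re ≤ ‖1 + G z‖ := fun z hz =>
    le_trans (by simp) (Complex.re_le_norm (1 + G z))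
  have hge1 : ∀ z ∈ closedBall (0 : ℂ) 1 \ E, 1 ≤ ‖1 + G z‖ := fun z hz => by
    linarith [hone z hz, hGre z hz]
  have hne0 : ∀ z ∈ closedBall (0 : ℂ) 1 \ E, 1 + G z ≠ 0 := fun z hz =>
    norm_pos_iff.1 (by linarith [hge1 z hz])
  have hballE : ∀ z ∈ ball (0 : ℂ) 1, z ∉ E := fun z hz h =>
    (mem_ball_zero_iff.1 hz).ne (mem_sphere_zero_iff_norm.1 (hE h))
  refine ⟨fun z => if z ∈ E then 1 else G z / (1 + G z), ?_, ?_, ?_, ?_, ?_⟩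
  · intro z hz
    by_cases hzE : z ∈ E
    · rw [ContinuousWithinAt, if_pos hzE, Metric.tendsto_nhds]
      intro r hr
      obtain ⟨K, hK⟩ := exists_nat_gt (4 / r)
      filter_upwards [mem_nhdsWithin_of_mem_nhds (hGE z hzE K), self_mem_nhdsWithin]
        with y hy hyb
      by_cases hyE : y ∈ E
      · simpa [hyE] using hr
      · have hy' : y ∈ closedBall (0 : ℂ) 1 \ E := ⟨hyb, hyE⟩
        have h1 : G y / (1 + G y) - 1 = -(1 / (1 + G y)) := by
          field_simp [hne0 y hy']; ring
        rw [if_neg hyE, dist_eq_norm, h1, norm_neg, norm_div, norm_one,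
          div_lt_iff₀ (by linarith [hge1 y hy'])]
        rw [div_lt_iff₀ hr] at hK
        have h2 : K * (1 / 4) < ‖1 + G y‖ := by linarith [hy hy', hone y hy']
        nlinarith
    · have hz' : z ∈ closedBall (0 : ℂ) 1 \ E := ⟨hz, hzE⟩
      have hc : ContinuousWithinAt (fun z => G z / (1 + G z)) (closedBall 0 1 \ E) z :=
        (hGc z hz').div (continuousWithinAt_const.add (hGc z hz')) (hne0 z hz')
      have hc' := hc.congr (g := fun z => if z ∈ E then 1 else G z / (1 + G z))
        (fun y hy => if_neg hy.2) (if_neg hzE)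
      refine hc'.mono_of_mem_nhdsWithin ?_
      exact Filter.inter_mem self_mem_nhdsWithin
        (mem_nhdsWithin_of_mem_nhds (hEclosed.isOpen_compl.mem_nhds hzE))
  · refine DifferentiableOn.congr (f := fun z => G z / (1 + G z)) ?_
      fun z hz => if_neg (hballE z hz)
    exact hGd.div ((differentiableOn_const _).add hGd) fun z hz =>
      hne0 z ⟨ball_subset_closedBall hz, hballE z hz⟩
  · intro z hz
    by_cases hzE : z ∈ E
    · simp [hzE]
    · have hz' : z ∈ closedBall (0 : ℂ) 1 \ E := ⟨hz, hzE⟩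
      have h1 := hge1 z hz'
      have h2 : ‖G z‖ ≤ ‖1 + G z‖ + 1 := by
        calc ‖G z‖ = ‖(1 + G z) - 1‖ := by ring_nf
          _ ≤ _ := (norm_sub_le _ _).trans (by simp)
      simp only [if_neg hzE]
      rw [norm_div, div_le_iff₀ (by linarith)]
      linarith
  · rintro z ⟨hz, hzU⟩
    have hzE : z ∉ E := fun h => hzU (hEU h)
    have h1 := hge1 z ⟨hz, hzE⟩
    have h2 : ‖G z‖ ≤ ε * d / 4 * (2 / d) := by
      refine hGb d hd z hz fun w hw => ?_
      by_contra! h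
      exact hzU (hdU (mem_thickening_iff.2 ⟨w, hw, by rwa [dist_eq_norm]⟩))
    have h3 : ε * d / 4 * (2 / d) = ε / 2 := by field_simp; norm_num
    simp only [if_neg hzE]
    rw [norm_div, div_lt_iff₀ (by linarith)]
    nlinarith
  · intro z hz
    exact if_pos hz

end
end

section
/- Let E ⊂ 𝕋 be a closed set of Lebesgue (arc-length) measure zero, written as a finite disjoint union E = E_1 ∪ … ∪ E_m of closed sets, and let v_1, …, v_m ∈ ℂ. Then there exists a sequence (Φ_n) of functions in the disc algebra A(𝔻), each having no zeros on the closed unit disc, which is uniformly bounded on the closed unit disc, such that Φ_n → 1 uniformly on each compact subset of the closed unit disc disjoint from E, and Φ_n → e^{v_j} uniformly on E_j for each j = 1, …, m. -/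
/-!
The functions are `Φ n = exp (∑ j, v j * g j n)`, which are automatically zero-free, where `g j n`
lies in the disc algebra, is bounded by `1`, tends to `1` uniformly on `E j` and tends to `0`
uniformly on compact subsets of the closed disc off `E j` (`exists_bounded_peaking`); in particular
it tends to `0` on each other `E i`.

For a closed null set `F ⊆ 𝕋` such functions are explicit. Cover `F` by `N` discs of radius `δ`
centred at points `c k ∈ F`, with `N * δ` as small as desired (`exists_small_cover`). Each
`δ / (1 + δ - conj (c k) * z)` has positive real part on the closed disc, real part at least `1/4`
within `δ` of `c k`, and modulus at most `δ / |z - c k|`. Hence a large multiple `H` of the sum has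
large real part on `F`, yet is small away from `F` (`exists_large_re`), and `H / (1 + H)` is
bounded by `1`, close to `1` on `F` and close to `0` away from `F`.
-/

open MeasureTheory Filter Metric Polynomial

noncomputable section

open scoped Topology Filter

/-- A closed null set `F ⊆ 𝕋` has, for every `ε > 0`, a cover by `N` discs of equal radius `δ`
centred on `F` with `N * δ ≤ ε`. Pulling back to `[-π, π]`, the cells `[kδ, (k+1)δ)` which meet the
preimage of `F` lie in its `δ`-thickening, whose measure tends to `0` with `δ` by compactness. -/
lemma exists_small_cover {F : Set ℂ} (hF : F ⊆ sphere (0 : ℂ) 1) (hFc : IsClosed F)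
    (h0 : circleNull F) {ε : ℝ} (hε : 0 < ε) :
    ∃ δ : ℝ, 0 < δ ∧ ∃ (S : Finset ℤ) (c : ℤ → ℂ), (∀ k ∈ S, c k ∈ F) ∧
      (∀ z ∈ F, ∃ k ∈ S, ‖z - c k‖ ≤ δ) ∧ S.card * δ ≤ ε := by
  classical
  set T : Set ℝ := {θ : ℝ | Complex.exp (θ * Complex.I) ∈ F} ∩ Set.Icc (-Real.pi) Real.pi with hT
  have hTc : IsCompact T := by
    refine IsCompact.inter_left isCompact_Icc (hFc.preimage ?_)
    fun_prop
  have hT0 : volume T = 0 := measure_mono_null Set.inter_subset_left h0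
  have hlim := tendsto_measure_cthickening_of_isCompact (μ := volume) hTc
  rw [hT0] at hlim
  have hev : ∀ᶠ r in nhdsWithin (0 : ℝ) (Set.Ioi 0),
      volume (cthickening r T) < ENNReal.ofReal ε :=
    (hlim.mono_left nhdsWithin_le_nhds).eventually_lt_const (by simpa using hε)
  obtain ⟨δ, hδ, hδ0⟩ := (hev.and self_mem_nhdsWithin).exists
  have hδ0 : 0 < δ := hδ0
  have hfin : ((fun θ : ℝ => ⌊θ / δ⌋) '' T).Finite := by
    refine (Set.finite_Icc ⌊-Real.pi / δ⌋ ⌊Real.pi / δ⌋).subset ?_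
    rintro _ ⟨θ, hθ, rfl⟩
    exact ⟨Int.floor_mono (by gcongr; exact hθ.2.1), Int.floor_mono (by gcongr; exact hθ.2.2)⟩
  have hch : ∀ k : ℤ, ∃ θ : ℝ, k ∈ hfin.toFinset → θ ∈ T ∧ ⌊θ / δ⌋ = k := by
    intro k
    by_cases hk : k ∈ hfin.toFinset
    · obtain ⟨θ, h1, h2⟩ := hfin.mem_toFinset.1 hk
      exact ⟨θ, fun _ => ⟨h1, h2⟩⟩
    · exact ⟨0, fun h => absurd h hk⟩
  choose t ht using hch
  have hcell : ∀ k : ℤ, ∀ x : ℝ, ⌊x / δ⌋ = k ↔ x ∈ Set.Ico (k * δ) ((k + 1) * δ) := by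
    intro k x
    rw [Int.floor_eq_iff, le_div_iff₀ hδ0, div_lt_iff₀ hδ0]; rfl
  have hclose : ∀ k : ℤ, ∀ x y : ℝ, ⌊x / δ⌋ = k → ⌊y / δ⌋ = k → |x - y| ≤ δ := by
    intro k x y hx hy
    obtain ⟨h1, h2⟩ := (hcell k x).1 hx
    obtain ⟨h3, h4⟩ := (hcell k y).1 hy
    rw [abs_le]; constructor <;> linarith
  refine ⟨δ, hδ0, hfin.toFinset, fun k => Complex.exp (t k * Complex.I),
    fun k hk => (ht k hk).1.1, ?_, ?_⟩
  · intro z hz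
    have hz1 : ‖z‖ = 1 := by simpa using hF hz
    have hzarg : Complex.exp (z.arg * Complex.I) = z := by
      simpa [hz1] using Complex.norm_mul_exp_arg_mul_I z
    have hzT : z.arg ∈ T :=
      ⟨by simpa [hzarg] using hz, (Complex.neg_pi_lt_arg z).le, Complex.arg_le_pi z⟩
    have hk : ⌊z.arg / δ⌋ ∈ hfin.toFinset := hfin.mem_toFinset.2 ⟨_, hzT, rfl⟩
    refine ⟨_, hk, ?_⟩
    have := hclose _ z.arg (t ⌊z.arg / δ⌋) rfl (ht _ hk).2
    set s := t ⌊z.arg / δ⌋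
    have e : z - Complex.exp (s * Complex.I) = Complex.exp (s * Complex.I) *
        (Complex.exp (Complex.I * ((z.arg - s : ℝ) : ℂ)) - 1) := by
      rw [mul_sub, ← Complex.exp_add, mul_one]
      nth_rw 1 [← hzarg]
      congr 2
      push_cast; ring
    rw [e, norm_mul, Complex.norm_exp_ofReal_mul_I, one_mul]
    exact (Real.norm_exp_I_mul_ofReal_sub_one_le).trans this
  · have hsub : (⋃ k ∈ hfin.toFinset, Set.Ico ((k : ℝ) * δ) ((k + 1) * δ)) ⊆ cthickening δ T := by
      refine Set.iUnion₂_subset fun k hk x hx => ?_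
      exact mem_cthickening_of_dist_le x (t k) δ T (ht k hk).1
        (hclose k x (t k) ((hcell k x).2 hx) (ht k hk).2)
    have hvol : volume (⋃ k ∈ hfin.toFinset, Set.Ico ((k : ℝ) * δ) ((k + 1) * δ)) =
        ENNReal.ofReal (hfin.toFinset.card * δ) := by
      rw [measure_biUnion_finset]
      · have : ∀ k : ℤ, ((k : ℝ) + 1) * δ - k * δ = δ := fun k => by ring
        simp only [Real.volume_Ico, this, Finset.sum_const, nsmul_eq_mul]
        rw [ENNReal.ofReal_mul (by positivity), ENNReal.ofReal_natCast]
      · intro k _ l _ hkl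
        refine Set.disjoint_left.2 fun x hx hx' => hkl ?_
        rw [← (hcell k x).2 hx, ← (hcell l x).2 hx']
      · exact fun _ _ => measurableSet_Ico
    have := (measure_mono hsub).trans hδ.le
    rw [hvol] at this
    exact (ENNReal.ofReal_le_ofReal_iff hε.le).1 this

/-- For a closed null set `F ⊆ 𝕋` there is a function in the disc algebra with nonnegative real
part that is as large as desired on `F` and as small as desired away from `F`: over a cover by
`N` discs of radius `δ` centred at `c k`, take `4 M ∑ δ / (1 + δ - conj (c k) * z)`. -/
lemma exists_large_re {F : Set ℂ} (hF : F ⊆ sphere (0 : ℂ) 1) (hFc : IsClosed F)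
    (h0 : circleNull F) {M ε : ℝ} (hM : 0 < M) (hε : 0 < ε) :
    ∃ H : ℂ → ℂ, ContinuousOn H (closedBall 0 1) ∧ DifferentiableOn ℂ H (ball 0 1) ∧
      (∀ z ∈ closedBall (0 : ℂ) 1, 0 ≤ (H z).re) ∧ (∀ z ∈ F, M ≤ (H z).re) ∧
      ∀ d : ℝ, 0 < d → ∀ z ∈ closedBall (0 : ℂ) 1, (∀ w ∈ F, d ≤ ‖z - w‖) → ‖H z‖ ≤ ε / d := by
  obtain ⟨δ, hδ, S, c, hc, hcov, hcard⟩ :=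
    exists_small_cover hF hFc h0 (ε := ε / (4 * M)) (by positivity)
  have hnc : ∀ k ∈ S, ‖c k‖ = 1 := fun k hk => by simpa using hF (hc k hk)
  set D : ℤ → ℂ → ℂ := fun k z => 1 + δ - (starRingEnd ℂ) (c k) * z with hD
  have hw : ∀ k ∈ S, ∀ z ∈ closedBall (0 : ℂ) 1, ((starRingEnd ℂ) (c k) * z).re ≤ 1 := by
    intro k hk z hz
    refine (Complex.re_le_norm _).trans ?_
    rw [norm_mul, RCLike.norm_conj, hnc k hk, one_mul]
    simpa using hz
  have hre : ∀ k ∈ S, ∀ z ∈ closedBall (0 : ℂ) 1, δ ≤ (D k z).re := by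
    intro k hk z hz
    have := hw k hk z hz
    simp only [hD, Complex.sub_re, Complex.add_re, Complex.one_re, Complex.ofReal_re]
    linarith
  have hne : ∀ k ∈ S, ∀ z ∈ closedBall (0 : ℂ) 1, D k z ≠ 0 := by
    intro k hk z hz h
    have := hre k hk z hz
    rw [h, Complex.zero_re] at this
    linarith
  have hdist : ∀ k ∈ S, ∀ z, ‖1 - (starRingEnd ℂ) (c k) * z‖ = ‖z - c k‖ := by
    intro k hk z
    have h1 : (starRingEnd ℂ) (c k) * c k = 1 := by
      rw [Complex.conj_mul', hnc k hk]; norm_num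
    rw [← h1, ← mul_sub, norm_mul, RCLike.norm_conj, hnc k hk, one_mul, norm_sub_rev]
  have hterm : ∀ k z, ((δ : ℂ) / D k z).re = δ * (D k z).re / Complex.normSq (D k z) := by
    intro k z
    rw [Complex.div_re]; simp
  have hpos : ∀ k ∈ S, ∀ z ∈ closedBall (0 : ℂ) 1, 0 ≤ ((δ : ℂ) / D k z).re := by
    intro k hk z hz
    rw [hterm]
    have := hδ.le.trans (hre k hk z hz)
    have := Complex.normSq_nonneg (D k z)
    positivity
  have hHre : ∀ z, (4 * M * ∑ k ∈ S, (δ : ℂ) / D k z).re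
      = 4 * M * ∑ k ∈ S, ((δ : ℂ) / D k z).re := by
    intro z
    rw [← Complex.re_sum, ← Complex.re_ofReal_mul]
    push_cast; rfl
  have hdiff : ∀ k, Differentiable ℂ (D k) := fun k => by simp only [hD]; fun_prop
  have hdO : DifferentiableOn ℂ (fun z => 4 * (M : ℂ) * ∑ k ∈ S, (δ : ℂ) / D k z)
      (closedBall 0 1) := by
    refine (DifferentiableOn.fun_sum fun k hk => ?_).const_mul _
    exact (differentiableOn_const _).fun_div (hdiff k).differentiableOn (hne k hk)
  refine ⟨fun z => 4 * M * ∑ k ∈ S, (δ : ℂ) / D k z, hdO.continuousOn,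
    hdO.mono ball_subset_closedBall, ?_, ?_, ?_⟩
  · intro z hz
    rw [hHre]
    have := Finset.sum_nonneg fun k hk => hpos k hk z hz
    positivity
  · intro z hz
    have hz1 : z ∈ closedBall (0 : ℂ) 1 := sphere_subset_closedBall (hF hz)
    rw [hHre]
    obtain ⟨k, hk, hzk⟩ := hcov z hz
    have h1 := Finset.single_le_sum (f := fun k => ((δ : ℂ) / D k z).re)
      (fun k hk => hpos k hk z hz1) hk
    have h2 : (1 : ℝ) / 4 ≤ ((δ : ℂ) / D k z).re := by
      rw [hterm]
      have hn0 : 0 < Complex.normSq (D k z) := Complex.normSq_pos.2 (hne k hk z hz1)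
      have hn : ‖D k z‖ ≤ 2 * δ := by
        have : D k z = (1 - (starRingEnd ℂ) (c k) * z) + δ := by simp only [hD]; ring
        rw [this]
        refine (norm_add_le _ _).trans ?_
        rw [hdist k hk, Complex.norm_of_nonneg hδ.le]
        linarith
      have hr := hre k hk z hz1
      rw [le_div_iff₀ hn0, Complex.normSq_eq_norm_sq]
      nlinarith [norm_nonneg (D k z), mul_le_mul_of_nonneg_left hr hδ.le]
    have h3 := h2.trans h1
    nlinarith
  · intro d hd z hz hzd
    have hb : ∀ k ∈ S, ‖(δ : ℂ) / D k z‖ ≤ δ / d := by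
      intro k hk
      rw [norm_div, Complex.norm_of_nonneg hδ.le]
      refine div_le_div_of_nonneg_left hδ.le hd ((hzd _ (hc k hk)).trans ?_)
      -- As `Re (conj (c k) * z) ≤ 1`, adding `δ > 0` moves `1 - conj (c k) * z` away from `0`.
      rw [← hdist k hk, Complex.norm_def, Complex.norm_def]
      refine Real.sqrt_le_sqrt ?_
      have := hw k hk z hz
      rw [Complex.normSq_apply, Complex.normSq_apply]
      simp only [hD, Complex.sub_re, Complex.add_re, Complex.one_re, Complex.ofReal_re,
        Complex.sub_im, Complex.add_im, Complex.one_im, Complex.ofReal_im]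
      nlinarith
    have hs : ‖∑ k ∈ S, (δ : ℂ) / D k z‖ ≤ S.card * (δ / d) := by
      simpa using norm_sum_le_of_le S hb
    have h4 : ‖(4 * M : ℂ)‖ = 4 * M := by
      rw [norm_mul, Complex.norm_of_nonneg hM.le]; norm_num
    rw [norm_mul, h4, le_div_iff₀ hd]
    have h5 : 4 * M * (S.card * δ) ≤ ε := by
      rw [le_div_iff₀ (by positivity)] at hcard; linarith
    calc 4 * M * ‖∑ k ∈ S, (δ : ℂ) / D k z‖ * d ≤ 4 * M * (S.card * (δ / d)) * d := by gcongr
      _ = 4 * M * (S.card * δ) := by field_simp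
      _ ≤ ε := h5

/-- Disc algebra functions bounded by `1` tending to `1` uniformly on `F` and to `0` uniformly on
compact sets off `F`: apply the Cayley-type map `w ↦ w / (1 + w)` to functions whose real part is
large on `F`. Uniform convergence is phrased with the filter `atTop ×ˢ 𝓟 K`. -/
lemma exists_bounded_peaking {F : Set ℂ} (hF : F ⊆ sphere (0 : ℂ) 1) (hFc : IsClosed F)
    (h0 : circleNull F) :
    ∃ g : ℕ → ℂ → ℂ, (∀ n, ContinuousOn (g n) (closedBall 0 1) ∧
        DifferentiableOn ℂ (g n) (ball 0 1)) ∧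
      (∀ n, ∀ z ∈ closedBall (0 : ℂ) 1, ‖g n z‖ ≤ 1) ∧
      (∀ K ⊆ closedBall (0 : ℂ) 1, IsCompact K → Disjoint K F →
        Tendsto (fun p : ℕ × ℂ => g p.1 p.2) (atTop ×ˢ 𝓟 K) (nhds 0)) ∧
      Tendsto (fun p : ℕ × ℂ => g p.1 p.2) (atTop ×ˢ 𝓟 F) (nhds 1) := by
  choose H hHc hHd hH0 hHF hHs using fun n : ℕ =>
    exists_large_re hF hFc h0 (M := n + 1) (ε := 1 / (n + 1)) (by positivity) (by positivity)
  have hge : ∀ n, ∀ z ∈ closedBall (0 : ℂ) 1, 1 ≤ ‖1 + H n z‖ := by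
    intro n z hz
    have h1 := Complex.re_le_norm (1 + H n z)
    have h2 := hH0 n z hz
    simp only [Complex.add_re, Complex.one_re] at h1
    linarith
  have hne : ∀ n, ∀ z ∈ closedBall (0 : ℂ) 1, 1 + H n z ≠ 0 := fun n z hz =>
    norm_pos_iff.1 (one_pos.trans_le (hge n z hz))
  have hinv : Tendsto (fun n : ℕ => 1 / ((n : ℝ) + 1)) atTop (nhds 0) :=
    tendsto_one_div_add_atTop_nhds_zero_nat
  refine ⟨fun n z => H n z / (1 + H n z), fun n => ⟨?_, ?_⟩, ?_, ?_, ?_⟩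
  · exact (hHc n).div (continuousOn_const.add (hHc n)) (hne n)
  · exact (hHd n).fun_div ((differentiableOn_const _).fun_add (hHd n))
      fun z hz => hne n z (ball_subset_closedBall hz)
  · intro n z hz
    rw [norm_div]
    refine div_le_one_of_le₀ ?_ (norm_nonneg _)
    rw [Complex.norm_def, Complex.norm_def]
    refine Real.sqrt_le_sqrt ?_
    have := hH0 n z hz
    rw [Complex.normSq_apply, Complex.normSq_apply]
    simp only [Complex.add_re, Complex.one_re, Complex.add_im, Complex.one_im]
    nlinarith
  · intro K hK hKc hKF
    obtain ⟨r, hr, hd⟩ := Metric.exists_pos_forall_lt_edist hKc hFc hKF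
    have hr : (0 : ℝ) < r := hr
    have hlim : Tendsto (fun p : ℕ × ℂ => 1 / ((p.1 : ℝ) + 1) / r) (atTop ×ˢ 𝓟 K) (nhds 0) := by
      have h := (hinv.div_const (r : ℝ)).comp (tendsto_fst (f := atTop) (g := 𝓟 K))
      rwa [zero_div] at h
    refine squeeze_zero_norm' ?_ hlim
    have : ∀ᶠ p : ℕ × ℂ in atTop ×ˢ 𝓟 K, p.2 ∈ K :=
      tendsto_snd.eventually (eventually_mem_set.2 (mem_principal_self K))
    filter_upwards [this] with p hp
    rw [norm_div]
    refine (div_le_self (norm_nonneg _) (hge _ _ (hK hp))).trans (hHs _ _ hr _ (hK hp) ?_)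
    intro w hw
    have := hd _ hp w hw
    rw [edist_nndist, ENNReal.coe_lt_coe] at this
    rw [← dist_eq_norm, ← coe_nndist]
    exact_mod_cast this.le
  · rw [tendsto_iff_norm_sub_tendsto_zero]
    have hlim : Tendsto (fun p : ℕ × ℂ => 1 / ((p.1 : ℝ) + 1)) (atTop ×ˢ 𝓟 F) (nhds 0) :=
      hinv.comp tendsto_fst
    refine squeeze_zero' (Eventually.of_forall fun _ => norm_nonneg _) ?_ hlim
    have : ∀ᶠ p : ℕ × ℂ in atTop ×ˢ 𝓟 F, p.2 ∈ F :=
      tendsto_snd.eventually (eventually_mem_set.2 (mem_principal_self F))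
    filter_upwards [this] with p hp
    have hz := sphere_subset_closedBall (hF hp)
    have e : H p.1 p.2 / (1 + H p.1 p.2) - 1 = -(1 / (1 + H p.1 p.2)) := by
      have := hne p.1 _ hz
      field_simp
      ring
    rw [e, norm_neg, norm_div, norm_one]
    refine one_div_le_one_div_of_le (by positivity) ?_
    have h1 := Complex.re_le_norm (1 + H p.1 p.2)
    have h2 := hHF p.1 _ hp
    simp only [Complex.add_re, Complex.one_re] at h1
    linarith

/-- Let `E ⊆ 𝕋` be closed of measure zero, written as a finite disjoint
union of closed sets `E j`, and let `v j ∈ ℂ`. There is a uniformly bounded sequence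
`(Φₙ)` in the disc algebra, zero-free on the closed disc, with `Φₙ → 1` uniformly on
every compact subset of the closed disc disjoint from `E` and `Φₙ → exp (v j)` uniformly
on each `E j`. -/
theorem exists_zeroFree_peaking_sequence (m : ℕ) (E : Fin m → Set ℂ)
    (hE : (⋃ j, E j) ⊆ sphere (0 : ℂ) 1) (hEclosed : ∀ j, IsClosed (E j))
    (hdisj : Pairwise (Function.onFun Disjoint E)) (hEnull : circleNull (⋃ j, E j))
    (v : Fin m → ℂ) :
    ∃ Φ : ℕ → ℂ → ℂ,
      (∀ n, ContinuousOn (Φ n) (closedBall (0 : ℂ) 1) ∧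
        DifferentiableOn ℂ (Φ n) (ball (0 : ℂ) 1) ∧
        ∀ z ∈ closedBall (0 : ℂ) 1, Φ n z ≠ 0) ∧
      (∃ C : ℝ, ∀ n, ∀ z ∈ closedBall (0 : ℂ) 1, ‖Φ n z‖ ≤ C) ∧
      (∀ K : Set ℂ, K ⊆ closedBall (0 : ℂ) 1 → IsCompact K → Disjoint K (⋃ j, E j) →
        TendstoUniformlyOn Φ (fun _ => 1) atTop K) ∧
      (∀ j, TendstoUniformlyOn Φ (fun _ => Complex.exp (v j)) atTop (E j)) := by
  have hnull : ∀ j, circleNull (E j) := fun j =>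
    measure_mono_null (Set.preimage_mono (Set.subset_iUnion E j)) hEnull
  have hsub : ∀ j, E j ⊆ sphere (0 : ℂ) 1 := fun j => (Set.subset_iUnion E j).trans hE
  choose g hg hg1 hg0 hgE using fun j => exists_bounded_peaking (hsub j) (hEclosed j) (hnull j)
  refine ⟨fun n z => Complex.exp (∑ j, v j * g j n z), fun n => ⟨?_, ?_, ?_⟩, ?_, ?_, ?_⟩
  · exact (continuousOn_finsetSum _ fun j _ => continuousOn_const.mul (hg j n).1).cexp
  · exact (DifferentiableOn.fun_sum fun j _ => (hg j n).2.const_mul _).cexp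
  · exact fun z _ => Complex.exp_ne_zero _
  · refine ⟨Real.exp (∑ j, ‖v j‖), fun n z hz => ?_⟩
    rw [Complex.norm_exp]
    refine Real.exp_le_exp.2 ((Complex.re_le_norm _).trans (norm_sum_le_of_le _ fun j _ => ?_))
    rw [norm_mul]
    exact mul_le_of_le_one_right (norm_nonneg _) (hg1 j n z hz)
  · intro K hK hKc hKE
    rw [← tendsto_prod_principal_iff]
    have h := tendsto_finsetSum Finset.univ fun j _ =>
      (hg0 j K hK hKc (hKE.mono_right (Set.subset_iUnion E j))).const_mul (v j)
    simpa [Function.HasUncurry.uncurry] using h.cexp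
  · intro i
    rw [← tendsto_prod_principal_iff]
    have hi : IsCompact (E i) := (isCompact_sphere 0 1).of_isClosed_subset (hEclosed i) (hsub i)
    -- Only the `i`-th summand survives in the limit, since `E i` is compact and off each other `E j`.
    have h := tendsto_finsetSum (f := fun j (p : ℕ × ℂ) => v j * g j p.1 p.2)
      (x := atTop ×ˢ 𝓟 (E i)) (a := fun j => if j = i then v j else 0) Finset.univ fun j _ => by
        split_ifs with hji
        · subst hji
          simpa using (hgE j).const_mul (v j)
        · simpa using (hg0 j (E i) ((hsub i).trans sphere_subset_closedBall) hi
            (hdisj (Ne.symm hji))).const_mul (v j)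
    simpa [Function.HasUncurry.uncurry] using h.cexp

end
end

section
/- Let E ⊆ 𝕋 be a closed set of positive Lebesgue (arc-length) measure. Then U_E = ∅; that is, no function f ∈ H² \ {0} has universal optimal polynomial approximants on E. -/
/-!
Identify `f ∈ H²` with its boundary function `F ∈ L²` of the circle, so that `‖q f - 1‖` becomes
an `L²` norm. Optimality of `Qₙ` means that `Qₙ F` is the orthogonal projection of `1` onto the
space of all `q F` with `deg q ≤ n` (`IsBoundary.polyMul_opa`). These spaces increase, so `Qₙ F`
converges in `L²` to the projection `h` of `1` onto the closed span of `F, zF, z²F, …`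
(`IsBoundary.tendsto_polyMul_opa`).

Suppose a subsequence of `Qₙ` tends to `0` uniformly on `E`. Passing to an a.e. convergent
subsequence, `h = 0` a.e. on `E` (`limFun_ae_zero`). On the other hand, for `k ≥ 1` the function
`zᵏh` lies in the closed span, so `⟪h, zᵏh⟫ = ⟪1, zᵏh⟫ = 0` (`inner_limFun_mulC_of_pos`): all
Fourier coefficients of `|h|²` except the one at `0` vanish, and `|h|²` is a.e. constant. As `E`
has positive measure, `h = 0` (`limFun_eq_zero`). Then `1` is orthogonal to every `q F`, so every
`Qₙ` is zero (`IsBoundary.opa_eq_zero`), and no subsequence can approximate the constant `1` at a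
point of `E`. This argument does not need the boundary uniqueness theorem for `H²`.
-/

open MeasureTheory Filter Metric Polynomial

noncomputable section

namespace OpaCircle

open scoped InnerProductSpace ENNReal
open AddCircle Topology

/-! ### Multiplication operators on `L²` of the circle -/

instance factTwoPi : Fact (0 < 2 * Real.pi) := ⟨Real.two_pi_pos⟩

/-- The circle `ℝ / 2πℤ`. -/
abbrev Circ := AddCircle (2 * Real.pi)

/-- `L²` of the circle for normalized Lebesgue measure. -/
abbrev L2 := Lp ℂ 2 (haarAddCircle : Measure Circ)

/-- The orthonormal basis `x ↦ e^{inx}` of `L²`. -/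
abbrev e (n : ℤ) : L2 := fourierLp 2 n

/-- Multiplication of `L²` functions by continuous functions. -/
def mulC : C(Circ, ℂ) →L[ℂ] L2 →L[ℂ] L2 :=
  ((ContinuousLinearMap.mul ℂ ℂ).holderL haarAddCircle ∞ 2 2).comp
    (ContinuousMap.toLp (E := ℂ) ∞ haarAddCircle ℂ)

lemma coeFn_mulC (p : C(Circ, ℂ)) (x : L2) :
    mulC p x =ᵐ[haarAddCircle] fun t => p t * x t := by
  have h1 := (ContinuousLinearMap.mul ℂ ℂ).coeFn_holder (r := 2)
    (ContinuousMap.toLp (E := ℂ) ∞ haarAddCircle ℂ p) x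
  have h2 := ContinuousMap.coeFn_toLp (E := ℂ) (p := ∞) (𝕜 := ℂ)
    (haarAddCircle : Measure Circ) p
  filter_upwards [h1, h2] with t h1 h2
  simp only [mulC, ContinuousLinearMap.comp_apply, ContinuousLinearMap.holderL_apply_apply]
  rw [h1, h2]; rfl

lemma mulC_mul (p q : C(Circ, ℂ)) (x : L2) : mulC (p * q) x = mulC p (mulC q x) := by
  apply Lp.ext
  filter_upwards [coeFn_mulC (p * q) x, coeFn_mulC p (mulC q x), coeFn_mulC q x]
    with t h1 h2 h3
  rw [h1, h2, h3]; simp [mul_assoc]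

lemma mulC_one (x : L2) : mulC 1 x = x := by
  apply Lp.ext
  filter_upwards [coeFn_mulC 1 x] with t h1
  rw [h1]; simp

lemma inner_mulC (p : C(Circ, ℂ)) (x y : L2) :
    ⟪x, mulC p y⟫_ℂ = ⟪mulC (star p) x, y⟫_ℂ := by
  rw [L2.inner_def, L2.inner_def]
  apply integral_congr_ae
  filter_upwards [coeFn_mulC p y, coeFn_mulC (star p) x] with t h1 h2
  rw [h1, h2]; simp; ring

lemma star_fourier (n : ℤ) : star (fourier n : C(Circ, ℂ)) = fourier (-n) := by
  ext t; simp only [fourier_neg]; rfl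

lemma fourier_mul_fourier (m n : ℤ) :
    (fourier m : C(Circ, ℂ)) * fourier n = fourier (m + n) := by
  ext t; simp only [ContinuousMap.mul_apply, fourier_add]

lemma fourier_one_pow (k : ℕ) : (fourier 1 : C(Circ, ℂ)) ^ k = fourier k := by
  induction k with
  | zero => ext t; simp
  | succ k ih => rw [pow_succ, ih, fourier_mul_fourier]; simp

lemma mulC_fourier_e (m n : ℤ) : mulC (fourier m) (e n) = e (m + n) := by
  apply Lp.ext
  filter_upwards [coeFn_mulC (fourier m) (e n), coeFn_fourierLp (T := 2 * Real.pi) 2 n,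
    coeFn_fourierLp (T := 2 * Real.pi) 2 (m + n)] with t h1 h2 h3
  rw [h1, h2, h3, fourier_add]

/-- The boundary function in `L²` of the product of the polynomial `q` with the function
whose boundary function is `F`, as a linear map in `q`. -/
def polyMul (F : L2) : Polynomial ℂ →ₗ[ℂ] L2 :=
  ((ContinuousLinearMap.apply ℂ L2 F).comp mulC : C(Circ, ℂ) →ₗ[ℂ] L2).comp
    (aeval (fourier 1 : C(Circ, ℂ))).toLinearMap

lemma polyMul_apply (F : L2) (q : Polynomial ℂ) :
    polyMul F q = mulC (aeval (fourier 1 : C(Circ, ℂ)) q) F := rfl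

lemma coeFn_polyMul (F : L2) (q : Polynomial ℂ) :
    polyMul F q =ᵐ[haarAddCircle] fun t => q.eval (toCircle t : ℂ) * F t := by
  filter_upwards [coeFn_mulC (aeval (fourier 1 : C(Circ, ℂ)) q) F] with t h
  rw [polyMul_apply, h]
  congr 1
  have := Polynomial.aeval_algHom_apply (ContinuousMap.evalAlgHom ℂ ℂ t)
    (fourier 1 : C(Circ, ℂ)) q
  have h1 : ContinuousMap.evalAlgHom ℂ ℂ t (fourier 1 : C(Circ, ℂ)) = (toCircle t : ℂ) :=
    fourier_one
  rw [h1, Polynomial.coe_aeval_eq_eval] at this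
  exact this.symm

lemma mulC_fourier_polyMul (F : L2) (k : ℕ) (q : Polynomial ℂ) :
    mulC (fourier k) (polyMul F q) = polyMul F (X ^ k * q) := by
  rw [polyMul_apply, polyMul_apply, ← mulC_mul, map_mul (aeval _), map_pow (aeval _), aeval_X,
    fourier_one_pow]

/-! ### The boundary function of an element of `H²` -/

lemma orthonormal_e : Orthonormal ℂ e := orthonormal_fourier

/-- Every `f ∈ H²` has a boundary function in `L²`: the sum of `∑ₖ f k e^{ikx}`. -/
lemma exists_boundary (f : H2) : ∃ F : L2,
    (∀ k : ℕ, ⟪e k, F⟫_ℂ = f k) ∧ ∀ n : ℤ, n < 0 → ⟪e n, F⟫_ℂ = 0 := by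
  have ho : Orthonormal ℂ (fun k : ℕ => e k) := orthonormal_e.comp _ Nat.cast_injective
  have hs := ho.orthogonalFamily.hasSum_linearIsometry f
  have key : ∀ n : ℤ, HasSum (fun k : ℕ => f k * if n = k then 1 else 0)
      ⟪e n, ho.orthogonalFamily.linearIsometry f⟫_ℂ := by
    intro n
    have := (innerSL ℂ (e n)).hasSum hs
    convert! this using 2 with k
    simp [orthonormal_iff_ite.mp orthonormal_e]
  refine ⟨ho.orthogonalFamily.linearIsometry f, fun k => ?_, fun n hn => ?_⟩
  · refine (key k).unique ?_
    have := hasSum_single (f := fun j : ℕ => f j * if (k : ℤ) = j then (1 : ℂ) else 0) k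
      (fun j hj => by simp [hj.symm])
    simpa using this
  · refine (key n).unique ?_
    convert! hasSum_zero using 2 with k
    rw [if_neg (by omega), mul_zero]

lemma polyMul_monomial (F : L2) (k : ℕ) (c : ℂ) :
    polyMul F (monomial k c) = c • mulC (fourier k) F := by
  have h : aeval (fourier 1 : C(Circ, ℂ)) (monomial k c) = c • fourier (k : ℤ) := by
    rw [aeval_monomial, fourier_one_pow, ← Algebra.smul_def]
  rw [polyMul_apply, h, ContinuousLinearMap.map_smul, smul_apply]

lemma inner_e_mulC_fourier (F : L2) (n m : ℤ) :
    ⟪e n, mulC (fourier m) F⟫_ℂ = ⟪e (n - m), F⟫_ℂ := by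
  rw [inner_mulC, star_fourier, mulC_fourier_e, neg_add_eq_sub]

lemma inner_e_polyMul_of_neg {F : L2} (h : ∀ n : ℤ, n < 0 → ⟪e n, F⟫_ℂ = 0) {n : ℤ}
    (hn : n < 0) (q : Polynomial ℂ) : ⟪e n, polyMul F q⟫_ℂ = 0 := by
  induction q using Polynomial.induction_on' with
  | add p q hp hq => rw [map_add, inner_add_right, hp, hq, add_zero]
  | monomial k c =>
    rw [polyMul_monomial, inner_smul_right, inner_e_mulC_fourier, h _ (by omega), mul_zero]

lemma inner_e_polyMul_nat {a : ℕ → ℂ} {F : L2} (ha : ∀ k : ℕ, ⟪e k, F⟫_ℂ = a k)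
    (h : ∀ n : ℤ, n < 0 → ⟪e n, F⟫_ℂ = 0) (n : ℕ) (q : Polynomial ℂ) :
    ⟪e n, polyMul F q⟫_ℂ = coeffMul q a n := by
  induction q using Polynomial.induction_on' with
  | add p q hp hq =>
    rw [map_add, inner_add_right, hp, hq]
    simp [coeffMul, add_mul, Finset.sum_add_distrib]
  | monomial k c =>
    rw [polyMul_monomial, inner_smul_right, inner_e_mulC_fourier]
    simp only [coeffMul, coeff_monomial, ite_mul, zero_mul, Finset.sum_ite_eq, Finset.mem_range]
    split_ifs with hk
    · rw [← Nat.cast_sub (by omega), ha]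
    · rw [h _ (by omega), mul_zero]

/-- `coeffMul` is multiplication of formal power series, a ring without zero divisors. -/
lemma coeffMul_eq_coeff (q : Polynomial ℂ) (a : ℕ → ℂ) (n : ℕ) :
    coeffMul q a n = PowerSeries.coeff n ((q : PowerSeries ℂ) * PowerSeries.mk a) := by
  rw [PowerSeries.coeff_mul, Finset.Nat.sum_antidiagonal_eq_sum_range_succ_mk]
  simp [coeffMul]

/-- Parseval's identity. -/
lemma norm_sq_eq_tsum (x : L2) : ‖x‖ ^ 2 = ∑' n : ℤ, ‖⟪e n, x⟫_ℂ‖ ^ 2 := by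
  have h := lp.norm_rpow_eq_tsum (p := 2) (by simp) (fourierBasis.repr x)
  rw [LinearIsometryEquiv.norm_map] at h
  simpa [HilbertBasis.repr_apply_apply] using h

/-- `F` is the boundary function of `f ∈ H²`: its Fourier coefficients are the Taylor
coefficients of `f`. -/
structure IsBoundary (f : H2) (F : L2) : Prop where
  nat : ∀ k : ℕ, ⟪e k, F⟫_ℂ = f k
  neg : ∀ n : ℤ, n < 0 → ⟪e n, F⟫_ℂ = 0

variable {f : H2} {F : L2}

lemma IsBoundary.polyMul_injective (hF : IsBoundary f F) (hf : f ≠ 0) :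
    Function.Injective (polyMul F) := by
  rw [injective_iff_map_eq_zero]
  intro q hq
  have h0 : (q : PowerSeries ℂ) * PowerSeries.mk (fun k => f k) = 0 := by
    ext n
    rw [← coeffMul_eq_coeff, ← inner_e_polyMul_nat hF.nat hF.neg, hq]; simp
  rcases mul_eq_zero.mp h0 with h | h
  · exact_mod_cast h
  · refine absurd ?_ hf
    ext n
    simpa using congrArg (PowerSeries.coeff n) h

lemma IsBoundary.h2ErrNorm_eq (hF : IsBoundary f F) (q : Polynomial ℂ) :
    h2ErrNorm q f = ‖polyMul F q - e 0‖ := by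
  rw [h2ErrNorm, Real.sqrt_eq_iff_eq_sq (tsum_nonneg fun _ => by positivity) (norm_nonneg _),
    norm_sq_eq_tsum]
  have hsupp : Function.support (fun n : ℤ => ‖⟪e n, polyMul F q - e 0⟫_ℂ‖ ^ 2) ⊆
      Set.range ((↑) : ℕ → ℤ) := by
    intro n hn
    by_contra hn'
    have hneg : n < 0 := by
      by_contra h0
      exact hn' ⟨n.toNat, by simp; omega⟩
    apply hn
    simp [inner_sub_right, inner_e_polyMul_of_neg hF.neg hneg,
      orthonormal_iff_ite.mp orthonormal_e, hneg.ne]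
  rw [← Function.Injective.tsum_eq Nat.cast_injective hsupp]
  refine tsum_congr fun n => ?_
  rw [inner_sub_right, inner_e_polyMul_nat hF.nat hF.neg, orthonormal_iff_ite.mp orthonormal_e]
  simp [errSeq]

/-! ### Optimal approximants as orthogonal projections -/

/-- The subspace `{q F : deg q ≤ n}` of `L²`. -/
def polySub (F : L2) (n : ℕ) : Submodule ℂ L2 := (degreeLE ℂ n).map (polyMul F)

instance (n : ℕ) : FiniteDimensional ℂ (polySub F n) := by
  have : FiniteDimensional ℂ (degreeLE ℂ n) := by
    rw [degreeLE_eq_span_X_pow]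
    exact FiniteDimensional.span_finset ℂ _
  unfold polySub; infer_instance

lemma polySub_mono : Monotone (polySub F) := fun _ _ h =>
  Submodule.map_mono (degreeLE_mono (by exact_mod_cast h))

/-- By Pythagoras, `Q` is optimal exactly when `Q F` is the orthogonal projection of `1` onto
`polySub F n`. -/
lemma IsBoundary.isOpa_iff (hF : IsBoundary f F) (n : ℕ) (Q : Polynomial ℂ) :
    IsOpa n f Q ↔ Q.degree ≤ n ∧ polyMul F Q = (polySub F n).starProjection (e 0) := by
  refine and_congr_right fun hQ => ?_
  have hmem : ∀ q : Polynomial ℂ, q.degree ≤ n → polyMul F q ∈ polySub F n := fun q hq =>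
    Submodule.mem_map_of_mem (mem_degreeLE.mpr hq)
  have pyth : ∀ q : Polynomial ℂ, q.degree ≤ n → ‖polyMul F q - e 0‖ ^ 2 =
      ‖polyMul F q - (polySub F n).starProjection (e 0)‖ ^ 2 +
        ‖(polySub F n).starProjection (e 0) - e 0‖ ^ 2 := by
    intro q hq
    have h1 : polyMul F q - e 0 = (polyMul F q - (polySub F n).starProjection (e 0)) +
      ((polySub F n).starProjection (e 0) - e 0) := by abel
    have h2 : ⟪polyMul F q - (polySub F n).starProjection (e 0),
        (polySub F n).starProjection (e 0) - e 0⟫_ℂ = 0 := by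
      have := (Submodule.sub_starProjection_mem_orthogonal (K := polySub F n) (e 0))
        _ (Submodule.sub_mem _ (hmem q hq) (Submodule.starProjection_apply_mem (polySub F n) (e 0)))
      rw [← neg_sub (e 0), inner_neg_right, this, neg_zero]
    rw [h1, sq, sq, sq, norm_add_sq_eq_norm_sq_add_norm_sq_of_inner_eq_zero _ _ h2]
  simp only [hF.h2ErrNorm_eq]
  constructor
  · intro h
    obtain ⟨q, hq, hqe⟩ := Submodule.starProjection_apply_mem (polySub F n) (e 0)
    have h1 := pow_le_pow_left₀ (norm_nonneg _) (h q (mem_degreeLE.mp hq)) 2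
    rw [pyth Q hQ, hqe] at h1
    rw [← sub_eq_zero, ← norm_eq_zero, ← sq_eq_zero_iff]
    nlinarith [sq_nonneg ‖polyMul F Q - (polySub F n).starProjection (e 0)‖]
  · intro h q hq
    rw [← sq_le_sq₀ (norm_nonneg _) (norm_nonneg _), pyth q hq, h]
    nlinarith [sq_nonneg ‖polyMul F q - (polySub F n).starProjection (e 0)‖]

/-- As `q ↦ q F` is injective, the optimal approximant exists and is unique, so `opa` takes its
genuine value and not the default `0`. -/
lemma IsBoundary.polyMul_opa (hF : IsBoundary f F) (hf : f ≠ 0) (n : ℕ) :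
    polyMul F (opa n f) = (polySub F n).starProjection (e 0) := by
  have hex : ∃! Q : Polynomial ℂ, IsOpa n f Q := by
    obtain ⟨q, hq, hqe⟩ := Submodule.starProjection_apply_mem (polySub F n) (e 0)
    refine ⟨q, (hF.isOpa_iff n q).mpr ⟨mem_degreeLE.mp hq, hqe⟩, fun q' hq' => ?_⟩
    exact hF.polyMul_injective hf (((hF.isOpa_iff n q').mp hq').2.trans hqe.symm)
  rw [opa, dif_pos hex]
  exact ((hF.isOpa_iff n _).mp hex.choose_spec.1).2

/-- The closed span of `F, zF, z²F, …` in `L²`. -/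
def invSub (F : L2) : Submodule ℂ L2 := (⨆ n, polySub F n).topologicalClosure

instance : CompleteSpace (invSub F) :=
  (Submodule.isClosed_topologicalClosure _).completeSpace_coe

lemma polyMul_mem_invSub (q : Polynomial ℂ) : polyMul F q ∈ invSub F :=
  Submodule.le_topologicalClosure _ (Submodule.mem_iSup_of_mem q.natDegree
    (Submodule.mem_map_of_mem (mem_degreeLE.mpr degree_le_natDegree)))

/-- A bounded operator maps the closed span of the `q F` into itself as soon as it maps each
`q F` there. -/
lemma map_mem_invSub (T : L2 →L[ℂ] L2) (hT : ∀ q, T (polyMul F q) ∈ invSub F) {x : L2}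
    (hx : x ∈ invSub F) : T x ∈ invSub F := by
  have hle : invSub F ≤ (invSub F).comap (T : L2 →ₗ[ℂ] L2) := by
    refine Submodule.topologicalClosure_minimal _ (iSup_le fun n => ?_) ?_
    · rintro _ ⟨q, -, rfl⟩
      exact hT q
    · exact (Submodule.isClosed_topologicalClosure _).preimage T.continuous
  exact hle hx

lemma mulC_mem_invSub (k : ℕ) {x : L2} (hx : x ∈ invSub F) :
    mulC (fourier k) x ∈ invSub F :=
  map_mem_invSub _ (fun q => by rw [mulC_fourier_polyMul]; exact polyMul_mem_invSub _) hx

/-- The orthogonal projection `h` of `1` onto the closed span of `F, zF, z²F, …`. When `F` is the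
boundary function of some `f ≠ 0`, it is the `L²` limit of `Qₙ F`. -/
def limFun (F : L2) : L2 := (invSub F).starProjection (e 0)

lemma IsBoundary.tendsto_polyMul_opa (hF : IsBoundary f F) (hf : f ≠ 0) :
    Tendsto (fun n => polyMul F (opa n f)) atTop (𝓝 (limFun F)) := by
  simp only [hF.polyMul_opa hf]
  have : (⨆ n, polySub F n).topologicalClosure.HasOrthogonalProjection :=
    inferInstanceAs (invSub F).HasOrthogonalProjection
  exact Submodule.starProjection_tendsto_closure_iSup (polySub F) polySub_mono (e 0)

/-- If `h = 0`, then `1` is orthogonal to `F, zF, z²F, …`, so all approximants vanish. -/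
lemma IsBoundary.opa_eq_zero (hF : IsBoundary f F) (hf : f ≠ 0) (h : limFun F = 0) (n : ℕ) :
    opa n f = 0 := by
  apply hF.polyMul_injective hf
  rw [map_zero, hF.polyMul_opa hf, Submodule.starProjection_apply_eq_zero_iff]
  rw [limFun, Submodule.starProjection_apply_eq_zero_iff] at h
  refine Submodule.orthogonal_le ?_ h
  rintro _ ⟨q, -, rfl⟩
  exact polyMul_mem_invSub q

/-! ### The limit has constant modulus -/

/-- Since `zᵏh` lies in the invariant subspace and `1 - h` is orthogonal to it, `⟪h, zᵏh⟫` equals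
`⟪1, zᵏh⟫`, the Fourier coefficient of `h` at `-k`, which vanishes. -/
lemma inner_limFun_mulC_of_pos (hF : ∀ n : ℤ, n < 0 → ⟪e n, F⟫_ℂ = 0) {k : ℕ} (hk : 0 < k) :
    ⟪limFun F, mulC (fourier k) (limFun F)⟫_ℂ = 0 := by
  have hmem : limFun F ∈ invSub F := Submodule.starProjection_apply_mem _ _
  have h1 : ⟪e 0 - limFun F, mulC (fourier k) (limFun F)⟫_ℂ = 0 :=
    Submodule.inner_left_of_mem_orthogonal (mulC_mem_invSub k hmem)
      (Submodule.sub_starProjection_mem_orthogonal (e 0))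
  have h2 : invSub F ≤ (ℂ ∙ e (-k))ᗮ := by
    refine Submodule.topologicalClosure_minimal _ (iSup_le fun n => ?_)
      (Submodule.isClosed_orthogonal _)
    rintro _ ⟨q, -, rfl⟩
    rw [Submodule.mem_orthogonal_singleton_iff_inner_right]
    exact inner_e_polyMul_of_neg hF (by omega) q
  have h3 := Submodule.mem_orthogonal_singleton_iff_inner_right.mp (h2 hmem)
  rw [inner_sub_left, inner_e_mulC_fourier, zero_sub, h3] at h1
  simpa using h1

/-- `∫ p |h|² = ‖h‖² ∫ p` for all continuous `p`: this holds for the characters `e^{inx}`, whose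
span is dense. -/
lemma inner_limFun_mulC (hF : ∀ n : ℤ, n < 0 → ⟪e n, F⟫_ℂ = 0) (p : C(Circ, ℂ)) :
    ⟪limFun F, mulC p (limFun F)⟫_ℂ = (‖limFun F‖ ^ 2 : ℂ) * ⟪e 0, mulC p (e 0)⟫_ℂ := by
  set A : C(Circ, ℂ) →L[ℂ] ℂ :=
    ((innerSL ℂ (limFun F)).comp ((ContinuousLinearMap.apply ℂ L2 (limFun F)))).comp mulC with hA
  set B : C(Circ, ℂ) →L[ℂ] ℂ := (‖limFun F‖ ^ 2 : ℂ) •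
    ((innerSL ℂ (e 0)).comp ((ContinuousLinearMap.apply ℂ L2 (e 0)))).comp mulC with hB
  have hAB : A = B := by
    refine ContinuousLinearMap.ext_on (s := Set.range (@fourier (2 * Real.pi))) ?_ ?_
    · rw [Submodule.dense_iff_topologicalClosure_eq_top]
      exact span_fourier_closure_eq_top
    rintro _ ⟨n, rfl⟩
    change ⟪limFun F, mulC (fourier n) (limFun F)⟫_ℂ =
      (‖limFun F‖ ^ 2 : ℂ) * ⟪e 0, mulC (fourier n) (e 0)⟫_ℂ
    rw [mulC_fourier_e, orthonormal_iff_ite.mp orthonormal_e]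
    rcases lt_trichotomy n 0 with hn | rfl | hn
    · rw [if_neg (by omega), mul_zero, inner_mulC, star_fourier, ← inner_conj_symm]
      obtain ⟨k, hk⟩ : ∃ k : ℕ, -n = k := ⟨(-n).toNat, by omega⟩
      rw [hk, inner_limFun_mulC_of_pos hF (by omega), map_zero]
    · have : (fourier 0 : C(Circ, ℂ)) = 1 := by ext; simp
      rw [this, mulC_one, inner_self_eq_norm_sq_to_K]; simp
    · obtain ⟨k, rfl⟩ : ∃ k : ℕ, n = k := ⟨n.toNat, by omega⟩
      rw [inner_limFun_mulC_of_pos hF (by omega), if_neg (by omega), mul_zero]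
  exact DFunLike.congr_fun hAB p

lemma integral_mul_norm_sq (p : BoundedContinuousFunction Circ ℝ) (x : L2) :
    ((∫ t, p t * ‖x t‖ ^ 2 ∂haarAddCircle : ℝ) : ℂ) =
      ⟪x, mulC ⟨fun t => (p t : ℂ), by fun_prop⟩ x⟫_ℂ := by
  rw [L2.inner_def, ← integral_complex_ofReal]
  apply integral_congr_ae
  filter_upwards [coeFn_mulC ⟨fun t => (p t : ℂ), by fun_prop⟩ x] with t h
  rw [h]
  simp only [RCLike.inner_apply, ContinuousMap.coe_mk]
  rw [mul_assoc, RCLike.mul_conj]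
  push_cast; rfl

lemma integrable_norm_sq (x : L2) :
    Integrable (fun t => ‖x t‖ ^ 2) (haarAddCircle : Measure Circ) :=
  (memLp_two_iff_integrable_sq_norm (Lp.aestronglyMeasurable x)).mp (Lp.memLp x)

/-- The measures `|h|² dx` and `‖h‖² dx` coincide, since they integrate continuous functions
equally; so if `h` vanishes a.e. on a set of positive measure, then `h = 0`. -/
lemma limFun_eq_zero (hF : ∀ n : ℤ, n < 0 → ⟪e n, F⟫_ℂ = 0) {S : Set Circ}
    (hS : MeasurableSet S) (hS0 : haarAddCircle S ≠ 0)
    (hv : ∀ᵐ t ∂haarAddCircle, t ∈ S → limFun F t = 0) : limFun F = 0 := by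
  set μ : Measure Circ := haarAddCircle.withDensity (fun t => ENNReal.ofReal (‖limFun F t‖ ^ 2))
    with hμ
  set ν : Measure Circ := ENNReal.ofReal (‖limFun F‖ ^ 2) • haarAddCircle with hν
  have : IsFiniteMeasure μ :=
    isFiniteMeasure_withDensity_ofReal (integrable_norm_sq _).2
  have : IsFiniteMeasure ν := by rw [hν]; exact Measure.smul_finite _ (by simp)
  have hme : AEMeasurable (fun t => ENNReal.ofReal (‖limFun F t‖ ^ 2))
      (haarAddCircle : Measure Circ) :=
    (integrable_norm_sq _).aestronglyMeasurable.aemeasurable.ennreal_ofReal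
  have hμν : μ = ν := by
    refine ext_of_forall_integral_eq_of_IsFiniteMeasure fun p => ?_
    rw [hμ, hν, integral_withDensity_eq_integral_toReal_smul₀ hme (by simp),
      integral_smul_measure, ENNReal.toReal_ofReal (by positivity)]
    have h1 := integral_mul_norm_sq p (limFun F)
    have h2 := integral_mul_norm_sq p (e 0)
    rw [inner_limFun_mulC hF, ← h2] at h1
    have h3 : ∫ t, p t * ‖e 0 t‖ ^ 2 ∂haarAddCircle = ∫ t, p t ∂haarAddCircle := by
      apply integral_congr_ae
      filter_upwards [coeFn_fourierLp (T := 2 * Real.pi) 2 0] with t h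
      rw [h]; simp
    rw [h3] at h1
    have h4 : ∫ t, p t * ‖limFun F t‖ ^ 2 ∂haarAddCircle =
      ‖limFun F‖ ^ 2 * ∫ t, p t ∂haarAddCircle := by exact_mod_cast h1
    rw [smul_eq_mul, ← h4]
    refine integral_congr_ae (ae_of_all _ fun t => ?_)
    simp only [smul_eq_mul]
    rw [ENNReal.toReal_ofReal (by positivity), mul_comm]
  have hμS : μ S = 0 := by
    rw [hμ, withDensity_apply _ hS, lintegral_eq_zero_iff' hme.restrict,
      EventuallyEq, ae_restrict_iff' hS]
    filter_upwards [hv] with t ht hts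
    simp [ht hts]
  rw [hμν, hν, Measure.smul_apply, smul_eq_mul, mul_eq_zero, or_iff_left hS0,
    ENNReal.ofReal_eq_zero] at hμS
  exact norm_eq_zero.mp (pow_eq_zero_iff two_ne_zero |>.mp (le_antisymm hμS (by positivity)))

/-! ### Behaviour on the set `E` -/

lemma toCircle_coe (θ : ℝ) :
    (toCircle (θ : Circ) : ℂ) = Complex.exp (θ * Complex.I) := by
  rw [AddCircle.toCircle_apply_mk, Circle.coe_exp]
  congr 2
  field_simp

/-- The condition that the set of angles of `E` is not null in `ℝ` passes to the circle, because
`ℝ` is covered by countably many periods. -/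
lemma haar_ne_zero {E : Set ℂ} (hE : IsClosed E)
    (hpos : volume {θ : ℝ | Complex.exp (θ * Complex.I) ∈ E} ≠ 0) :
    haarAddCircle {t : Circ | (toCircle t : ℂ) ∈ E} ≠ 0 := by
  intro h0
  apply hpos
  set S : Set Circ := {t : Circ | (toCircle t : ℂ) ∈ E} with hSdef
  have hS : MeasurableSet S :=
    (hE.preimage (by fun_prop : Continuous fun t : Circ => (toCircle t : ℂ))).measurableSet
  have hpre : {θ : ℝ | Complex.exp (θ * Complex.I) ∈ E} = ((↑) : ℝ → Circ) ⁻¹' S := by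
    ext θ; simp [hSdef, toCircle_coe]
  have hvol : volume S = 0 := by
    rw [volume_eq_smul_haarAddCircle, Measure.smul_apply, h0, smul_zero]
  have huniv := iUnion_Ioc_add_zsmul (Real.two_pi_pos) 0
  rw [hpre, ← Set.inter_univ (_ ⁻¹' S), ← huniv, Set.inter_iUnion, measure_iUnion_null_iff]
  intro n
  have hmp := AddCircle.measurePreserving_mk (2 * Real.pi) (0 + n • (2 * Real.pi))
  have h1 := hmp.measure_preimage hS.nullMeasurableSet
  rw [hvol, Measure.restrict_apply (hmp.measurable hS)] at h1
  rw [add_zsmul, one_zsmul, ← add_assoc]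
  exact h1

/-- If `Qₛ F → h` in `L²` while `Qₛ → 0` uniformly on `E`, then `h = 0` a.e. on `E`: a subsequence
of `Qₛ F` converges to `h` almost everywhere. -/
lemma limFun_ae_zero {E : Set ℂ} {Q : ℕ → Polynomial ℂ}
    (hlim : Tendsto (fun s => polyMul F (Q s)) atTop (𝓝 (limFun F)))
    (hunif : TendstoUniformlyOn (fun s z => (Q s).eval z) (fun _ => 0) atTop E) :
    ∀ᵐ t ∂haarAddCircle, t ∈ {t : Circ | (toCircle t : ℂ) ∈ E} → limFun F t = 0 := by
  obtain ⟨φ, hφ, hae⟩ := (tendstoInMeasure_of_tendsto_Lp hlim).exists_seq_tendsto_ae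
  filter_upwards [hae, ae_all_iff.mpr fun s => coeFn_polyMul F (Q s)] with t ht hQ htE
  refine tendsto_nhds_unique ht ?_
  simp only [hQ]
  simpa using ((hunif.tendsto_at htE).comp hφ.tendsto_atTop).mul_const (F t)

end OpaCircle

/-- If `E ⊆ 𝕋` is closed of positive arc-length measure, then no
nonzero `f ∈ H²` has universal optimal polynomial approximants on `E`. -/
theorem universalOpa_empty_of_pos_measure (E : Set ℂ) (hE : E ⊆ sphere (0 : ℂ) 1)
    (hEclosed : IsClosed E)
    (hEpos : volume {θ : ℝ | Complex.exp (θ * Complex.I) ∈ E} ≠ 0) :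
    {f : H2 | f ≠ 0 ∧ HasUniversalOpa E f} = ∅ := by
  refine Set.eq_empty_iff_forall_notMem.mpr ?_
  rintro f ⟨hf, hU⟩
  obtain ⟨F, hF1, hF2⟩ := OpaCircle.exists_boundary f
  have hF : OpaCircle.IsBoundary f F := ⟨hF1, hF2⟩
  obtain ⟨m, hm, hm0⟩ := hU (fun _ => 0) continuousOn_const
  have hzero : OpaCircle.limFun F = 0 :=
    OpaCircle.limFun_eq_zero hF2
      (hEclosed.preimage (by fun_prop :
        Continuous fun t : OpaCircle.Circ => (AddCircle.toCircle t : ℂ))).measurableSet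
      (OpaCircle.haar_ne_zero hEclosed hEpos)
      (OpaCircle.limFun_ae_zero ((hF.tendsto_polyMul_opa hf).comp hm.tendsto_atTop) hm0)
  obtain ⟨m', -, hm1⟩ := hU (fun _ => 1) continuousOn_const
  obtain ⟨θ, hθ⟩ := nonempty_of_measure_ne_zero hEpos
  have h1 := hm1.tendsto_at hθ
  simp only [hF.opa_eq_zero hf hzero, eval_zero] at h1
  exact zero_ne_one (tendsto_nhds_unique tendsto_const_nhds h1)

end
end
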